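/- In every 3-connected graph on n vertices, the circumference satisfies c ≥ min{n, 3δ − κ}, where δ is the minimum degree and κ the connectivity. -/

import Mathlib

open SimpleGraph

variable {V : Type*}

/-- `G` is `k`-connected: more than `k` vertices and removing fewer than `k`
vertices leaves a connected graph. -/
def KConnected (G : SimpleGraph V) [Fintype V] (k : ℕ) : Prop :=
  k < Fintype.card V ∧
    ∀ S : Finset V, S.card < k → (G.induce ((↑S : Set V)ᶜ)).Connected

/-- vertex connectivity `κ`. -/
noncomputable def connectivity (G : SimpleGraph V) [Fintype V] : ℕ :=
  sSup {k | KConnected G k}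

/-- independence number `α`. -/
noncomputable def indepNumber (G : SimpleGraph V) [Fintype V] : ℕ :=
  sSup {k | ∃ s : Finset V, (∀ u ∈ s, ∀ v ∈ s, ¬ G.Adj u v) ∧ s.card = k}

/-- circumference `c`: length of a longest cycle. -/
noncomputable def circumference (G : SimpleGraph V) [Fintype V] : ℕ :=
  sSup {n | ∃ (v : V) (w : G.Walk v v), w.IsCycle ∧ w.length = n}

/-- `w` is a longest cycle of `G`. -/
def IsLongestCycle {G : SimpleGraph V} {v : V} (w : G.Walk v v) : Prop :=
  w.IsCycle ∧ ∀ (u : V) (w' : G.Walk u u), w'.IsCycle → w'.length ≤ w.length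

/-- dominating cycle: every edge has an endpoint on the cycle. -/
def IsDominatingCycle {G : SimpleGraph V} {v : V} (w : G.Walk v v) : Prop :=
  w.IsCycle ∧ ∀ x y, G.Adj x y → x ∈ w.support ∨ y ∈ w.support

/-- generalized cycle of length `n` with vertex set `W`: single vertices are
cycles of length 1, edges are cycles of length 2. -/
def ExtCycle (G : SimpleGraph V) (W : Set V) (n : ℕ) : Prop :=
  (n = 1 ∧ ∃ v : V, W = {v}) ∨
  (n = 2 ∧ ∃ u v : V, G.Adj u v ∧ W = {u, v}) ∨
  (3 ≤ n ∧ ∃ (v : V) (w : G.Walk v v), w.IsCycle ∧ w.length = n ∧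
      W = {x | x ∈ w.support})

/-- `p̄`: the length of a longest path in `G \ C`. -/
noncomputable def pathBar (G : SimpleGraph V) [Fintype V] {v : V} (w : G.Walk v v) : ℕ :=
  sSup {n | ∃ (a b : {x : V | x ∉ w.support})
      (p : (G.induce {x : V | x ∉ w.support}).Walk a b), p.IsPath ∧ p.length = n}

/-- `c̄`: the length of a longest (generalized) cycle in `G \ C`. -/
noncomputable def cycBar (G : SimpleGraph V) [Fintype V] {v : V} (w : G.Walk v v) : ℕ :=
  sSup {n | ∃ W, ExtCycle (G.induce {x : V | x ∉ w.support}) W n}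

/-- `CD_m`-cycle: every (generalized) cycle of length at least `m` meets `w`. -/
def IsCDCycle (G : SimpleGraph V) {v : V} (w : G.Walk v v) (m : ℕ) : Prop :=
  w.IsCycle ∧ ∀ (W : Set V) (n : ℕ), ExtCycle G W n → m ≤ n → ∃ x ∈ W, x ∈ w.support

/-- there is a path of length `n` from `a` to `b` with all its vertices in `W`. -/
def Pth (G : SimpleGraph V) (W : Finset V) (a b : V) (n : ℕ) : Prop :=
  ∃ p : G.Walk a b, p.IsPath ∧ p.length = n ∧ ∀ x ∈ p.support, x ∈ W

theorem Pth.mono {G : SimpleGraph V} {W W' : Finset V} {a b : V} {n : ℕ}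
    (h : Pth G W a b n) (hW : W ⊆ W') : Pth G W' a b n := by
  obtain ⟨p, h1, h2, h3⟩ := h
  exact ⟨p, h1, h2, fun x hx => hW (h3 x hx)⟩

theorem Pth.single {G : SimpleGraph V} (a : V) : Pth G {a} a a 0 :=
  ⟨Walk.nil, by simp, rfl, by simp⟩

theorem Pth.symm {G : SimpleGraph V} {W : Finset V} {a b : V} {n : ℕ}
    (h : Pth G W a b n) : Pth G W b a n := by
  obtain ⟨p, h1, h2, h3⟩ := h
  exact ⟨p.reverse, h1.reverse, by simpa using h2, fun x hx => h3 x (by simpa using hx)⟩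

theorem Pth.left_mem {G : SimpleGraph V} {W : Finset V} {a b : V} {n : ℕ}
    (h : Pth G W a b n) : a ∈ W := by
  obtain ⟨p, h1, h2, h3⟩ := h
  exact h3 _ (by simp)

theorem Pth.right_mem {G : SimpleGraph V} {W : Finset V} {a b : V} {n : ℕ}
    (h : Pth G W a b n) : b ∈ W := h.symm.left_mem

theorem Pth.pos {G : SimpleGraph V} {W : Finset V} {a b : V} {n : ℕ}
    (h : Pth G W a b n) (hab : a ≠ b) : 1 ≤ n := by
  obtain ⟨p, h1, h2, h3⟩ := h
  rcases Nat.eq_zero_or_pos n with h0 | h0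
  · subst h0
    exact absurd (Walk.eq_of_length_eq_zero h2) hab
  · exact h0

theorem Pth.join {G : SimpleGraph V} [DecidableEq V] {W W' : Finset V} {a b d : V} {m n : ℕ}
    (h : Pth G W a b m) (h' : Pth G W' b d n) (hd : ∀ x ∈ W, x ∈ W' → x = b) :
    Pth G (W ∪ W') a d (m + n) := by
  obtain ⟨p, h1, h2, h3⟩ := h
  obtain ⟨q, h1', h2', h3'⟩ := h'
  refine ⟨p.append q, ?_, by simp [h2, h2'], ?_⟩
  · rw [Walk.isPath_def, Walk.support_append, List.nodup_append']
    refine ⟨h1.support_nodup, ?_, ?_⟩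
    · exact h1'.support_nodup.sublist (List.tail_sublist _)
    · intro x hx hx'
      have hxq : x ∈ q.support := List.mem_of_mem_tail hx'
      have hxb := hd x (h3 x hx) (h3' x hxq)
      subst hxb
      have := h1'.support_nodup
      rw [← Walk.cons_tail_support, List.nodup_cons] at this
      exact this.1 hx'
  · intro x hx
    rw [Walk.mem_support_append_iff] at hx
    rcases hx with hx | hx
    · exact Finset.mem_union_left _ (h3 x hx)
    · exact Finset.mem_union_right _ (h3' x hx)

theorem Pth.link {G : SimpleGraph V} [DecidableEq V] {W W' : Finset V} {a b c d : V} {m n : ℕ}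
    (h : Pth G W a b m) (h' : Pth G W' c d n) (hbc : G.Adj b c) (hd : Disjoint W W') :
    Pth G (W ∪ W') a d (m + n + 1) := by
  have hbW := h.right_mem
  have h1 : Pth G (insert b W') b d (n + 1) := by
    obtain ⟨q, h1', h2', h3'⟩ := h'
    refine ⟨Walk.cons hbc q, ?_, by simp [h2'], ?_⟩
    · rw [Walk.cons_isPath_iff]
      exact ⟨h1', fun hb => Finset.disjoint_left.1 hd hbW (h3' b hb)⟩
    · intro x hx
      rw [Walk.support_cons, List.mem_cons] at hx
      rcases hx with rfl | hx
      · simp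
      · exact Finset.mem_insert_of_mem (h3' x hx)
  have h2 := h.join h1 (by
    intro x hx hx'
    rcases Finset.mem_insert.1 hx' with h | h
    · exact h
    · exact absurd h (Finset.disjoint_left.1 hd hx))
  have h3 : m + n + 1 = m + (n + 1) := by ring
  rw [h3]
  refine h2.mono ?_
  intro x hx
  simp only [Finset.mem_union, Finset.mem_insert] at hx ⊢
  rcases hx with h | rfl | h
  · exact Or.inl h
  · exact Or.inl hbW
  · exact Or.inr h

theorem Pth.to_cycle {G : SimpleGraph V} [Fintype V] {W : Finset V} {a b : V} {n : ℕ}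
    (h : Pth G W a b n) (hab : G.Adj b a) (hn : 2 ≤ n) : n + 1 ≤ circumference G := by
  classical
  obtain ⟨p, h1, h2, h3⟩ := h
  have hcyc : (Walk.cons hab p).IsCycle := by
    rw [Walk.cons_isCycle_iff]
    refine ⟨h1, fun he => ?_⟩
    cases p with
    | nil => simp at h2; omega
    | cons h' q =>
      rw [Walk.edges_cons, List.mem_cons] at he
      rw [Walk.cons_isPath_iff] at h1
      rcases he with he | he
      · rw [Sym2.eq_iff] at he
        rcases he with ⟨rfl, rfl⟩ | ⟨rfl, -⟩
        · exact absurd hab (G.loopless.irrefl _)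
        · have := h1.1
          rw [Walk.isPath_iff_nil] at this
          have := Walk.length_eq_zero_iff.2 this
          rw [Walk.length_cons] at h2; omega
      · exact h1.2 (Walk.snd_mem_support_of_mem_edges _ he)
  refine le_csSup ⟨Fintype.card V, ?_⟩ ⟨b, _, hcyc, by simp [h2]⟩
  rintro m ⟨v, w, hw, rfl⟩
  have h5 := List.Nodup.length_le_card hw.support_nodup
  rw [List.length_tail, Walk.length_support] at h5
  exact h5

theorem conn_path {G : SimpleGraph V} [DecidableEq V] (Y : Finset V) (p q : V) (hp : p ∈ Y)
    (h : ∀ Z ⊆ Y, p ∈ Z → q ∉ Z → ∃ v ∈ Z, ∃ u ∈ Y, u ∉ Z ∧ G.Adj v u) :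
    ∃ n, Pth G Y p q n := by
  classical
  by_contra hcon
  obtain ⟨v, hv, u, hu, huZ, hvu⟩ := h (Y.filter (fun v => ∃ n, Pth G Y p v n))
    (Finset.filter_subset _ _)
    (by simp only [Finset.mem_filter]; exact ⟨hp, 0, (Pth.single p).mono (by simpa using hp)⟩)
    (by simp only [Finset.mem_filter]; exact fun h => hcon h.2)
  simp only [Finset.mem_filter] at hv huZ
  obtain ⟨n, w, h1, h2, h3⟩ := hv.2
  apply huZ
  refine ⟨hu, _, (w.concat hvu).bypass, Walk.bypass_isPath _, rfl, ?_⟩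
  intro x hx
  have := Walk.support_bypass_subset_support _ hx
  rw [Walk.support_concat] at this
  simp only [List.mem_append, List.mem_singleton] at this
  rcases this with h | rfl
  · exact h3 x h
  · exact hu

/-- a longest cycle, parametrised periodically. -/
structure LCyc (G : SimpleGraph V) (f : ℕ → V) (c : ℕ) : Prop where
  c3 : 3 ≤ c
  adj : ∀ i, G.Adj (f i) (f (i + 1))
  inj : ∀ i j, f i = f j ↔ i % c = j % c
  max : ∀ (W : Finset V) (a b : V) (n : ℕ), Pth G W a b n → G.Adj b a → 2 ≤ n → n + 1 ≤ c

theorem LCyc.shift {G : SimpleGraph V} {f : ℕ → V} {c : ℕ} (h : LCyc G f c) (s : ℕ) :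
    LCyc G (fun i => f (s + i)) c := by
  refine ⟨h.c3, fun i => h.adj (s + i), fun i j => ?_, h.max⟩
  rw [h.inj]
  exact ⟨fun hh => Nat.ModEq.add_left_cancel' s hh, fun hh => Nat.ModEq.add_left s hh⟩

theorem LCyc.injw {G : SimpleGraph V} {f : ℕ → V} {c : ℕ} (h : LCyc G f c) {i j : ℕ}
    (hij : f i = f j) (h1 : i < j + c) (h2 : j < i + c) : i = j := by
  have := (h.inj i j).1 hij
  have hi := Nat.div_add_mod i c
  have hj := Nat.div_add_mod j c
  have h3 := h.c3
  rcases lt_trichotomy (i / c) (j / c) with hlt | heq | hlt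
  · have : c * (i / c + 1) ≤ c * (j / c) := Nat.mul_le_mul_left _ hlt
    rw [Nat.mul_add, Nat.mul_one] at this
    omega
  · rw [heq] at hi; omega
  · have : c * (j / c + 1) ≤ c * (i / c) := Nat.mul_le_mul_left _ hlt
    rw [Nat.mul_add, Nat.mul_one] at this
    omega

theorem LCyc.period {G : SimpleGraph V} {f : ℕ → V} {c : ℕ} (h : LCyc G f c) (i : ℕ) :
    f (i + c) = f i := by
  rw [h.inj]; simp

/-- the segment `f s, …, f (s+m)`. -/
theorem LCyc.seg {G : SimpleGraph V} [DecidableEq V] {f : ℕ → V} {c : ℕ} (h : LCyc G f c)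
    (s t : ℕ) (hst : s ≤ t) (hm : t < s + c) :
    Pth G ((Finset.Icc s t).image f) (f s) (f t) (t - s) := by
  induction t, hst using Nat.le_induction with
  | base => simpa using Pth.single (G := G) (f s)
  | succ t hst ih =>
    have h1 := (ih (by omega)).link (Pth.single (G := G) (f (t + 1))) (h.adj t) (by
      rw [Finset.disjoint_singleton_right, Finset.mem_image]
      rintro ⟨j, hj, hj'⟩
      rw [Finset.mem_Icc] at hj
      have := h.injw hj' (by omega) (by omega)
      omega)
    have h2 : t + 1 - s = t - s + 0 + 1 := by omega
    rw [h2]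
    refine h1.mono ?_
    intro x hx
    simp only [Finset.mem_union, Finset.mem_image, Finset.mem_Icc, Finset.mem_singleton] at hx ⊢
    rcases hx with ⟨j, hj, rfl⟩ | rfl
    · exact ⟨j, by omega, rfl⟩
    · exact ⟨t + 1, by omega, rfl⟩

/-- replacing an arc by a detour outside of the cycle cannot make it longer. -/
theorem LCyc.gap {G : SimpleGraph V} [DecidableEq V] {f : ℕ → V} {c : ℕ} (h : LCyc G f c)
    {s d : ℕ} (hd : 1 ≤ d) (hdc : d < c) {W : Finset V} (hW : ∀ i, f i ∉ W) {a b : V} {n : ℕ}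
    (hp : Pth G W a b n) (ha : G.Adj (f s) a) (hb : G.Adj b (f (s + d))) : n + 2 ≤ d := by
  have h1 := h.seg (s + d) (s + c) (by omega) (by omega)
  rw [h.period s] at h1
  have h2 := h1.link hp ha (by
    rw [Finset.disjoint_left]
    intro x hx
    rw [Finset.mem_image] at hx
    obtain ⟨j, -, rfl⟩ := hx
    exact hW j)
  have hne : f (s + d) ≠ f s := fun hh => by
    have := h.injw hh (by omega) (by omega)
    omega
  have h3 := h.max _ _ _ _ h2 hb (by omega)
  omega

/-- `D ∪ {w}` has no cut vertex (in a cut formulation) and `w` has a neighbour in `D`. -/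
structure Leaf (G : SimpleGraph V) [DecidableEq V] (D : Finset V) (w : V) : Prop where
  notMem : w ∉ D
  adj : ∃ v ∈ D, G.Adj v w
  cut : ∀ D' ⊆ D, D' ≠ D → D'.Nonempty → ∀ z, z ∉ D' →
    ∃ v ∈ D', ∃ u ∈ insert w D, u ∉ D' ∧ u ≠ z ∧ G.Adj v u

/-- among all the pieces cut off by one vertex, a smallest one is a leaf. -/
theorem exists_leaf (G : SimpleGraph V) [DecidableEq V] (W D₀ : Finset V) (w₀ : V)
    (hne : D₀.Nonempty) (hw₀ : w₀ ∈ W) (hw₀' : w₀ ∉ D₀)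
    (hcl : ∀ v ∈ D₀, ∀ u ∈ W, G.Adj v u → u ∈ D₀ ∨ u = w₀)
    (hconn : ∀ D ⊆ D₀, D.Nonempty → ∃ v ∈ D, ∃ u ∈ W, u ∉ D ∧ G.Adj v u) :
    ∃ D w, D ⊆ D₀ ∧ D.Nonempty ∧ w ∈ W ∧ Leaf G D w ∧
      ∀ v ∈ D, ∀ u ∈ W, G.Adj v u → u ∈ D ∨ u = w := by
  classical
  let P : ℕ → Prop := fun k => ∃ D w, D ⊆ D₀ ∧ D.Nonempty ∧ w ∈ W ∧ w ∉ D ∧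
      (∀ v ∈ D, ∀ u ∈ W, G.Adj v u → u ∈ D ∨ u = w) ∧ D.card = k
  have hP : ∃ k, P k := ⟨_, D₀, w₀, subset_rfl, hne, hw₀, hw₀', hcl, rfl⟩
  obtain ⟨D, w, h1, h2, h3, h4, h5, h6⟩ := Nat.find_spec hP
  refine ⟨D, w, h1, h2, h3, ⟨h4, ?_, ?_⟩, h5⟩
  · obtain ⟨v, hv, u, hu, huD, hvu⟩ := hconn D h1 h2
    rcases h5 v hv u hu hvu with h | rfl
    · exact absurd h huD
    · exact ⟨v, hv, hvu⟩
  · intro D' hD' hne' hnon z hz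
    by_contra hcon
    push Not at hcon
    have key : ∀ v ∈ D', ∀ u ∈ W, G.Adj v u → u ∈ D' ∨ u = z := by
      intro v hv u hu hvu
      by_contra hh
      push Not at hh
      refine hcon v hv u ?_ hh.1 hh.2 hvu
      rcases h5 v (hD' hv) u hu hvu with h | rfl
      · exact Finset.mem_insert_of_mem h
      · exact Finset.mem_insert_self _ _
    have hlt : D'.card < D.card := Finset.card_lt_card (Finset.ssubset_iff_subset_ne.2 ⟨hD', hne'⟩)
    rw [h6] at hlt
    refine Nat.find_min hP hlt ?_
    by_cases hzW : z ∈ W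
    · exact ⟨D', z, hD'.trans h1, hnon, hzW, hz, key, rfl⟩
    · refine ⟨D', w, hD'.trans h1, hnon, h3, fun h => h4 (hD' h), ?_, rfl⟩
      intro v hv u hu hvu
      rcases key v hv u hu hvu with h | rfl
      · exact Or.inl h
      · exact absurd hu hzW

/-- Erdős–Gallai type lemma for leaves. -/
theorem leaf_path (G : SimpleGraph V) [DecidableEq V] [DecidableRel G.Adj] (m : ℕ) :
    ∀ (D : Finset V) (w a : V) (k : ℕ), D.card = m → Leaf G D w → a ∈ D →
      (∀ v ∈ D, k ≤ ((insert w D).filter (fun u => G.Adj v u)).card) →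
      ∃ n, k ≤ n ∧ Pth G (insert w D) a w n := by
  induction m using Nat.strong_induction_on with
  | _ m ih =>
  intro D w a k hm hL ha hk
  have haw : a ≠ w := fun h => hL.notMem (h ▸ ha)
  by_cases hDa : D.erase a = ∅
  · skip
    have hDa' : D = {a} := by
      apply Finset.eq_singleton_iff_unique_mem.2 ⟨ha, fun x hx => ?_⟩
      by_contra hne
      have : x ∈ D.erase a := Finset.mem_erase.2 ⟨hne, hx⟩
      rw [hDa] at this
      simp at this
    subst hDa'
    obtain ⟨v, hv, hvw⟩ := hL.adj
    rw [Finset.mem_singleton] at hv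
    subst hv
    refine ⟨1, ?_, ?_⟩
    · refine (hk v ha).trans ?_
      rw [Finset.card_le_one]
      intro x hx y hy
      simp only [Finset.mem_filter, Finset.mem_insert, Finset.mem_singleton] at hx hy
      have e1 : x = w := hx.1.resolve_right (fun h => by subst h; exact G.loopless.irrefl _ hx.2)
      have e2 : y = w := hy.1.resolve_right (fun h => by subst h; exact G.loopless.irrefl _ hy.2)
      rw [e1, e2]
    · refine ((Pth.single (G := G) v).link (Pth.single (G := G) w) hvw ?_).mono ?_
      · simpa using haw
      · intro x hx; simp only [Finset.mem_union, Finset.mem_singleton, Finset.mem_insert] at hx ⊢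
        tauto
  · have hDane : (D.erase a).Nonempty := Finset.nonempty_iff_ne_empty.2 hDa
    have hsub : ∀ D' ⊆ D.erase a, D' ⊆ D ∧ D' ≠ D ∧ a ∉ D' := by
      intro D' h
      have haD' : a ∉ D' := fun h' => by simpa using h h'
      exact ⟨h.trans (Finset.erase_subset _ _), fun h' => haD' (h' ▸ ha), haD'⟩
    obtain ⟨D', w', h1, h2, h3, h4, h5⟩ := exists_leaf G ((insert w D).erase a) (D.erase a) w
      hDane
      (Finset.mem_erase.2 ⟨haw.symm, Finset.mem_insert_self _ _⟩)
      (fun h => hL.notMem (Finset.mem_of_mem_erase h))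
      (by
        intro v hv u hu hvu
        rw [Finset.mem_erase, Finset.mem_insert] at hu
        rcases hu.2 with h | h
        · exact Or.inr h
        · exact Or.inl (Finset.mem_erase.2 ⟨hu.1, h⟩))
      (by
        intro E hE hEne
        obtain ⟨e1, e2, e3⟩ := hsub E hE
        obtain ⟨v, hv, u, hu, huE, hua, hvu⟩ := hL.cut E e1 e2 hEne a e3
        exact ⟨v, hv, u, Finset.mem_erase.2 ⟨hua, hu⟩, huE, hvu⟩)
    obtain ⟨d1, d2, d3⟩ := hsub D' h1
    have hw'D : w' ∈ insert w D := Finset.mem_of_mem_erase h3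
    have hw'a : w' ≠ a := Finset.ne_of_mem_erase h3
    obtain ⟨a', ha', u, hu, huD', huw', hau⟩ := hL.cut D' d1 d2 h2 w' h4.notMem
    have hua : u = a := by
      by_contra hne
      rcases h5 a' ha' u (Finset.mem_erase.2 ⟨hne, hu⟩) hau with h | h
      · exact huD' h
      · exact huw' h
    subst hua
    have hlt : D'.card < m := by
      rw [← hm]
      exact Finset.card_lt_card (Finset.ssubset_iff_subset_ne.2 ⟨d1, d2⟩)
    obtain ⟨n, hn, hpn⟩ := ih D'.card hlt D' w' a' (k - 1) rfl h4 ha' (by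
      intro v hv
      have h7 : (insert w D).filter (fun x => G.Adj v x) ⊆
          insert u ((insert w' D').filter (fun x => G.Adj v x)) := by
        intro x hx
        rw [Finset.mem_filter] at hx
        rw [Finset.mem_insert, Finset.mem_filter, Finset.mem_insert]
        by_cases hxu : x = u
        · exact Or.inl hxu
        · right
          rcases h5 v hv x (Finset.mem_erase.2 ⟨hxu, hx.1⟩) hx.2 with h | h
          · exact ⟨Or.inr h, hx.2⟩
          · exact ⟨Or.inl h, hx.2⟩
      have h8 := (Finset.card_le_card h7).trans (Finset.card_insert_le _ _)
      have h9 := hk v (d1 hv)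
      omega)
    obtain ⟨n', hn'⟩ := conn_path (G := G) (((insert w D).erase u) \ D') w' w
      (Finset.mem_sdiff.2 ⟨h3, h4.notMem⟩) (by
        intro Z hZ hw'Z hwZ
        have hZD : ∀ x ∈ Z, x ∈ D ∧ x ≠ u ∧ x ∉ D' := by
          intro x hx
          have := hZ hx
          simp only [Finset.mem_sdiff, Finset.mem_erase, Finset.mem_insert] at this
          refine ⟨this.1.2.resolve_left (fun h => hwZ (h ▸ hx)), this.1.1, this.2⟩
        obtain ⟨e1, e2, e3⟩ := hsub (Z ∪ D') (by
          intro x hx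
          rcases Finset.mem_union.1 hx with h | h
          · exact Finset.mem_erase.2 ⟨(hZD x h).2.1, (hZD x h).1⟩
          · exact h1 h)
        obtain ⟨v, hv, x, hx, hxE, hxu, hvx⟩ := hL.cut (Z ∪ D') e1 e2
          ⟨w', Finset.mem_union_left _ hw'Z⟩ u e3
        rw [Finset.mem_union, not_or] at hxE
        rcases Finset.mem_union.1 hv with hv | hv
        · exact ⟨v, hv, x, by
            simp only [Finset.mem_sdiff, Finset.mem_erase]; exact ⟨⟨hxu, hx⟩, hxE.2⟩, hxE.1, hvx⟩
        · rcases h5 v hv x (Finset.mem_erase.2 ⟨hxu, hx⟩) hvx with h | h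
          · exact absurd h hxE.2
          · exact absurd (h ▸ hw'Z) hxE.1)
    have j1 := hpn.join hn' (by
      intro x hx hx'
      rcases Finset.mem_insert.1 hx with h | h
      · exact h
      · exact absurd h (Finset.mem_sdiff.1 hx').2)
    have j2 := (Pth.single (G := G) u).link j1 hau.symm (by
      rw [Finset.disjoint_singleton_left]
      simp only [Finset.mem_union, Finset.mem_insert, Finset.mem_sdiff, Finset.mem_erase]
      rintro ((h | h) | h)
      · exact hw'a h.symm
      · exact d3 h
      · exact h.1.1 rfl)
    refine ⟨_, ?_, j2.mono ?_⟩
    · omega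
    · intro x hx
      simp only [Finset.mem_union, Finset.mem_singleton, Finset.mem_insert, Finset.mem_sdiff,
        Finset.mem_erase] at hx hw'D ⊢
      rcases hx with rfl | ((rfl | h) | h)
      · exact Or.inr ha
      · exact hw'D
      · exact Or.inr (d1 h)
      · exact h.1.2

theorem LCyc.reach {G : SimpleGraph V} {f : ℕ → V} {c : ℕ} (h : LCyc G f c) (i j : ℕ) :
    ∃ e < c, f (i + e) = f j := by
  have h3 := h.c3
  induction i with
  | zero =>
    refine ⟨j % c, Nat.mod_lt _ (by omega), ?_⟩
    rw [h.inj]; simp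
  | succ i ih =>
    obtain ⟨e, he, hf⟩ := ih
    rcases Nat.eq_zero_or_pos e with h0 | h0
    · subst h0
      refine ⟨c - 1, by omega, ?_⟩
      have : i + 1 + (c - 1) = i + c := by omega
      rw [this, h.period, ← hf]; rfl
    · refine ⟨e - 1, by omega, ?_⟩
      have : i + 1 + (e - 1) = i + e := by omega
      rw [this, hf]

theorem LCyc.trans {G : SimpleGraph V} {f : ℕ → V} {c : ℕ} (h : LCyc G f c) {i j : ℕ}
    (hij : f i = f j) (a : ℕ) : f (i + a) = f (j + a) := by
  rw [h.inj] at hij ⊢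
  exact Nat.ModEq.add_right a hij

theorem LCyc.cancel {G : SimpleGraph V} {f : ℕ → V} {c : ℕ} (h : LCyc G f c) {i j a : ℕ}
    (hij : f (i + a) = f (j + a)) : f i = f j := by
  rw [h.inj] at hij ⊢
  exact Nat.ModEq.add_right_cancel' a hij

/-- the vertices of the cycle. -/
def cyc [DecidableEq V] (f : ℕ → V) (c : ℕ) : Finset V := (Finset.Icc 1 c).image f

theorem LCyc.mem_cyc {G : SimpleGraph V} [DecidableEq V] {f : ℕ → V} {c : ℕ} (h : LCyc G f c)
    (x : V) : x ∈ cyc f c ↔ ∃ i, f i = x := by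
  unfold cyc
  rw [Finset.mem_image]
  constructor
  · rintro ⟨i, -, h⟩; exact ⟨i, h⟩
  · rintro ⟨j, rfl⟩
    obtain ⟨e, he, hf⟩ := h.reach 1 j
    exact ⟨1 + e, by rw [Finset.mem_Icc]; omega, hf⟩

theorem LCyc.card_image {G : SimpleGraph V} [DecidableEq V] {f : ℕ → V} {c : ℕ} (h : LCyc G f c)
    {I : Finset ℕ} (hI : I ⊆ Finset.Icc 1 c) (s : ℕ) :
    (I.image (fun i => f (i + s))).card = I.card := by
  apply Finset.card_image_of_injOn
  intro i hi j hj hij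
  have h1 := Finset.mem_Icc.1 (hI hi)
  have h2 := Finset.mem_Icc.1 (hI hj)
  exact h.injw (h.cancel hij) (by omega) (by omega)

theorem LCyc.card_cyc {G : SimpleGraph V} [DecidableEq V] {f : ℕ → V} {c : ℕ} (h : LCyc G f c) :
    (cyc f c).card = c := by
  have := h.card_image (I := Finset.Icc 1 c) subset_rfl 0
  simpa [cyc] using this

theorem LCyc.gaps {G : SimpleGraph V} [DecidableEq V] {f : ℕ → V} {c : ℕ} (h : LCyc G f c)
    (T : Finset V) (hTC : T ⊆ cyc f c) (hT2 : 2 ≤ T.card) :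
    ∃ (nxt : V → V) (gp : V → ℕ),
      (∀ u ∈ T, nxt u ∈ T ∧ ∀ (W : Finset V) (a b : V) (n : ℕ), (∀ x ∈ W, x ∉ cyc f c) →
        Pth G W a b n → G.Adj u a → G.Adj b (nxt u) → n + 2 ≤ gp u) ∧
      (∑ u ∈ T, gp u ≤ c) ∧
      (∀ P ⊆ T, P.Nonempty → P ≠ T → ∃ u ∈ P, nxt u ∉ P) := by
  classical
  have key : ∀ u ∈ T, ∃ i d, f i = u ∧ 1 ≤ d ∧ d < c ∧ f (i + d) ∈ T ∧
      ∀ e, 1 ≤ e → e < d → f (i + e) ∉ T := by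
    intro u hu
    obtain ⟨i, hi⟩ := (h.mem_cyc u).1 (hTC hu)
    obtain ⟨v, hv, hvu⟩ := Finset.exists_mem_ne (by omega : 1 < T.card) u
    obtain ⟨j, hj⟩ := (h.mem_cyc v).1 (hTC hv)
    obtain ⟨e, he, hf⟩ := h.reach i j
    have hex : ∃ d, 1 ≤ d ∧ f (i + d) ∈ T := by
      refine ⟨e, ?_, by rw [hf, hj]; exact hv⟩
      rcases Nat.eq_zero_or_pos e with h0 | h0
      · subst h0
        exact absurd (by rw [← hj, ← hf, ← hi]; rfl) hvu
      · exact h0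
    have he' : Nat.find hex ≤ e := Nat.find_min' hex (by
      refine ⟨?_, by rw [hf, hj]; exact hv⟩
      rcases Nat.eq_zero_or_pos e with h0 | h0
      · subst h0
        exact absurd (by rw [← hj, ← hf, ← hi]; rfl) hvu
      · exact h0)
    obtain ⟨h1, h2⟩ := Nat.find_spec hex
    refine ⟨i, Nat.find hex, hi, h1, by omega, h2, ?_⟩
    intro e' h1' h2' h3'
    exact Nat.find_min hex h2' ⟨h1', h3'⟩
  choose! ix gp k1 k2 k3 k4 k5 using key
  refine ⟨fun u => f (ix u + gp u), gp, ?_, ?_, ?_⟩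
  · intro u hu
    refine ⟨k4 u hu, ?_⟩
    intro W a b n hW hp ha hb
    exact h.gap (k2 u hu) (k3 u hu) (fun i hi => hW _ hi ((h.mem_cyc _).2 ⟨i, rfl⟩)) hp
      (by rw [k1 u hu]; exact ha) hb
  · rw [← h.card_cyc]
    have : ∑ u ∈ T, gp u = (T.sigma (fun u => Finset.range (gp u))).card := by
      rw [Finset.card_sigma]; simp
    rw [this]
    apply Finset.card_le_card_of_injOn (fun p => f (ix p.1 + p.2))
    · intro p _
      exact (h.mem_cyc _).2 ⟨_, rfl⟩
    · have aux : ∀ u ∈ T, ∀ v ∈ T, ∀ a b, a ≤ b → b < gp v → f (ix u + a) = f (ix v + b) →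
          u = v ∧ a = b := by
        intro u hu v hv a b hab hb hf
        have e1 : ix v + b = (ix v + (b - a)) + a := by omega
        rw [e1] at hf
        have e2 := h.cancel hf
        rcases Nat.eq_zero_or_pos (b - a) with h0 | h0
        · refine ⟨?_, by omega⟩
          rw [h0, Nat.add_zero, k1 u hu, k1 v hv] at e2
          exact e2
        · exact absurd (by rw [← e2, k1 u hu]; exact hu) (k5 v hv (b - a) h0 (by omega))
      rintro ⟨u, a⟩ hp ⟨v, b⟩ hq hf
      simp only [Finset.coe_sigma, Set.mem_sigma_iff, Finset.mem_coe, Finset.mem_range] at hp hq hf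
      rcases le_total a b with hab | hab
      · obtain ⟨rfl, rfl⟩ := aux u hp.1 v hq.1 a b hab hq.2 hf
        rfl
      · obtain ⟨rfl, rfl⟩ := aux v hq.1 u hp.1 b a hab hp.2 hf.symm
        rfl
  · intro P hPT hPne hPT'
    by_contra hcon
    push Not at hcon
    obtain ⟨u₀, hu₀⟩ := hPne
    have claim : ∀ d, ∃ e ≤ d, f (ix u₀ + e) ∈ P ∧ ∀ e', e < e' → e' ≤ d → f (ix u₀ + e') ∉ T := by
      intro d
      induction d with
      | zero => exact ⟨0, le_rfl, by rw [Nat.add_zero, k1 u₀ (hPT hu₀)]; exact hu₀, by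
          intro e' h1 h2; omega⟩
      | succ d ih =>
        obtain ⟨e, he, heP, hee⟩ := ih
        by_cases hd : f (ix u₀ + (d + 1)) ∈ T
        · refine ⟨d + 1, le_rfl, ?_, by intro e' h1 h2; omega⟩
          set u := f (ix u₀ + e) with hu
          have huT := hPT heP
          have e1 := k1 u huT
          have e2 := hcon u heP
          have e3 := h.trans e1
          have e4 : f (ix u + (d + 1 - e)) = f (ix u₀ + (d + 1)) := by
            rw [e3]; congr 1; omega
          have e5 : gp u ≤ d + 1 - e := by
            by_contra hlt
            exact k5 u huT (d + 1 - e) (by omega) (by omega) (e4 ▸ hd)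
          have e6 : gp u = d + 1 - e := by
            by_contra hne
            apply hee (e + gp u) (by have := k2 u huT; omega) (by omega)
            have e7 := k4 u huT
            rw [e3] at e7
            rwa [← Nat.add_assoc]
          rw [e6, e4] at e2
          exact e2
        · refine ⟨e, by omega, heP, ?_⟩
          intro e' h1 h2
          by_cases h3 : e' = d + 1
          · rw [h3]; exact hd
          · exact hee e' h1 (by omega)
    apply hPT'
    apply Finset.Subset.antisymm hPT
    intro v hv
    obtain ⟨j, hj⟩ := (h.mem_cyc v).1 (hTC hv)
    obtain ⟨d, -, hd⟩ := h.reach (ix u₀) j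
    obtain ⟨e, he, heP, hee⟩ := claim d
    rcases Nat.lt_or_ge e d with hlt | hge
    · exact absurd (by rw [hd, hj]; exact hv) (hee d hlt le_rfl)
    · have : e = d := by omega
      rw [this, hd, hj] at heP
      exact heP

section domcase

variable {G : SimpleGraph V} [Fintype V] [DecidableEq V] [DecidableRel G.Adj] {f : ℕ → V} {c : ℕ}

theorem LCyc.no_consec (h : LCyc G f c) {x : V} (hx : ∀ i, f i ≠ x) (i : ℕ)
    (h1 : G.Adj x (f i)) (h2 : G.Adj x (f (i + 1))) : False := by
  have h3 := h.c3
  have := h.gap (s := i) (d := 1) le_rfl (by omega) (W := {x})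
    (fun i hi => hx i (Finset.mem_singleton.1 hi)) (Pth.single x) h1.symm h2
  omega

theorem LCyc.succ_indep (h : LCyc G f c) {x : V} (hx : ∀ i, f i ≠ x) (i j : ℕ)
    (hij : f i ≠ f j) (h1 : G.Adj x (f i)) (h2 : G.Adj x (f j)) :
    ¬ G.Adj (f (i + 1)) (f (j + 1)) := by
  intro hadj
  have h3 := h.c3
  obtain ⟨e, he, hf⟩ := h.reach i j
  have he1 : 1 ≤ e := by
    rcases Nat.eq_zero_or_pos e with h0 | h0
    · subst h0
      exact absurd hf hij
    · exact h0
  have hf1 : f (j + 1) = f (i + e + 1) := (h.trans hf 1).symm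
  have s1 := (h.seg (i + e + 1) (i + c) (by omega) (by omega)).symm
  have s2 := h.seg (i + 1) (i + e) (by omega) (by omega)
  have s3 := s1.link s2 (by rw [← hf1]; exact hadj.symm) (by
    rw [Finset.disjoint_left]
    intro y hy hy'
    obtain ⟨p, hp, hpy⟩ := Finset.mem_image.1 hy
    obtain ⟨q, hq, hqy⟩ := Finset.mem_image.1 hy'
    rw [Finset.mem_Icc] at hp hq
    have := h.injw (hpy.trans hqy.symm) (by omega) (by omega)
    omega)
  have s4 := s3.link (Pth.single (G := G) x) (by rw [hf]; exact h2.symm) (by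
    rw [Finset.disjoint_singleton_right, Finset.mem_union]
    rintro (hy | hy)
    · obtain ⟨p, hp, hpy⟩ := Finset.mem_image.1 hy
      exact hx _ hpy
    · obtain ⟨p, hp, hpy⟩ := Finset.mem_image.1 hy
      exact hx _ hpy)
  have s5 := h.max _ _ _ _ s4 (by rw [h.period]; exact h1) (by omega)
  omega

theorem LCyc.cross (h : LCyc G f c) {x z : V} (hx : ∀ i, f i ≠ x) (hz : ∀ i, f i ≠ z)
    (hxz : x ≠ z) (h0 : G.Adj x (f c)) (h1 : G.Adj z (f 1)) {b j : ℕ} (hb : 1 ≤ b) (hbj : b < j)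
    (hj : j ≤ c) (hxb : G.Adj x (f b)) (hzj : G.Adj z (f j)) : b + 3 ≤ j := by
  have h3 := h.c3
  have s1 := (h.seg 1 b (by omega) (by omega)).symm
  have s2 := h.seg j c (by omega) (by omega)
  have s3 := s1.link (Pth.single (G := G) z) h1.symm (by
    rw [Finset.disjoint_singleton_right]
    intro hy
    obtain ⟨p, hp, hpy⟩ := Finset.mem_image.1 hy
    exact hz _ hpy)
  have s4 := s3.link s2 hzj (by
    rw [Finset.disjoint_left]
    intro y hy hy'
    obtain ⟨q, hq, hqy⟩ := Finset.mem_image.1 hy'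
    rcases Finset.mem_union.1 hy with hy | hy
    · obtain ⟨p, hp, hpy⟩ := Finset.mem_image.1 hy
      rw [Finset.mem_Icc] at hp hq
      have := h.injw (hpy.trans hqy.symm) (by omega) (by omega)
      omega
    · rw [Finset.mem_singleton] at hy
      exact hz q (hqy.trans hy))
  have s5 := s4.link (Pth.single (G := G) x) h0.symm (by
    rw [Finset.disjoint_singleton_right, Finset.mem_union, Finset.mem_union]
    rintro ((hy | hy) | hy)
    · obtain ⟨p, hp, hpy⟩ := Finset.mem_image.1 hy
      exact hx _ hpy
    · rw [Finset.mem_singleton] at hy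
      exact hxz hy
    · obtain ⟨p, hp, hpy⟩ := Finset.mem_image.1 hy
      exact hx _ hpy)
  have s6 := h.max _ _ _ _ s5 hxb (by omega)
  omega

/-- indices of the neighbours of `x` on the cycle. -/
def nbI (G : SimpleGraph V) [DecidableRel G.Adj] (f : ℕ → V) (c : ℕ) (x : V) : Finset ℕ :=
  (Finset.Icc 1 c).filter (fun i => G.Adj x (f i))

theorem LCyc.card_nbI (h : LCyc G f c) {x : V} (hx : ∀ y, G.Adj x y → ∃ i, f i = y) {δ : ℕ}
    (hδ : δ ≤ (Finset.univ.filter (fun y => G.Adj x y)).card) : δ ≤ (nbI G f c x).card := by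
  refine hδ.trans ?_
  have : Finset.univ.filter (fun y => G.Adj x y) ⊆ (nbI G f c x).image f := by
    intro y hy
    rw [Finset.mem_filter] at hy
    have := (h.mem_cyc y).2 (hx y hy.2)
    unfold cyc at this
    rw [Finset.mem_image] at this ⊢
    obtain ⟨i, hi, rfl⟩ := this
    exact ⟨i, Finset.mem_filter.2 ⟨hi, hy.2⟩, rfl⟩
  exact (Finset.card_le_card this).trans Finset.card_image_le

theorem LCyc.cross_count0 (h : LCyc G f c) {x z : V} (hx : ∀ i, f i ≠ x) (hz : ∀ i, f i ≠ z)
    (hxz : x ≠ z) (h0 : G.Adj x (f c)) (h1 : G.Adj z (f 1))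
    (hxN : ∀ y, G.Adj x y → ∃ i, f i = y) (hzN : ∀ y, G.Adj z y → ∃ i, f i = y) {δ : ℕ}
    (hδ : ∀ x, δ ≤ (Finset.univ.filter (fun y => G.Adj x y)).card) : 3 * δ ≤ c + 2 := by
  have cx := h.card_nbI hxN (hδ x)
  have cz := h.card_nbI hzN (hδ z)
  have mx : ∀ {i}, i ∈ nbI G f c x → 1 ≤ i ∧ i ≤ c ∧ G.Adj x (f i) := by
    intro i hi
    unfold nbI at hi
    rw [Finset.mem_filter, Finset.mem_Icc] at hi
    exact ⟨hi.1.1, hi.1.2, hi.2⟩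
  have mz : ∀ {i}, i ∈ nbI G f c z → 1 ≤ i ∧ i ≤ c ∧ G.Adj z (f i) := by
    intro i hi
    unfold nbI at hi
    rw [Finset.mem_filter, Finset.mem_Icc] at hi
    exact ⟨hi.1.1, hi.1.2, hi.2⟩
  have c1 : ((nbI G f c x).image (· + 2)).card = (nbI G f c x).card :=
    Finset.card_image_of_injective _ (add_left_injective 2)
  have c2 : ((nbI G f c z).image (· + 1)).card = (nbI G f c z).card :=
    Finset.card_image_of_injective _ (add_left_injective 1)
  have d1 : Disjoint ((nbI G f c x).image (· + 2)) ((nbI G f c z).image (· + 1)) := by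
    rw [Finset.disjoint_left]
    intro y hy hy'
    obtain ⟨b, hb, rfl⟩ := Finset.mem_image.1 hy
    obtain ⟨j, hj, hj'⟩ := Finset.mem_image.1 hy'
    obtain ⟨b1, b2, b3⟩ := mx hb
    obtain ⟨j1, j2, j3⟩ := mz hj
    have := h.cross hx hz hxz h0 h1 b1 (by omega) j2 b3 j3
    omega
  have d2 : Disjoint ((nbI G f c x).image (· + 2) ∪ (nbI G f c z).image (· + 1))
      (nbI G f c z) := by
    rw [Finset.disjoint_left]
    intro y hy hy'
    obtain ⟨j1, j2, j3⟩ := mz hy'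
    rcases Finset.mem_union.1 hy with hy | hy
    · obtain ⟨b, hb, rfl⟩ := Finset.mem_image.1 hy
      obtain ⟨b1, b2, b3⟩ := mx hb
      have := h.cross hx hz hxz h0 h1 b1 (by omega) j2 b3 j3
      omega
    · obtain ⟨b, hb, rfl⟩ := Finset.mem_image.1 hy
      obtain ⟨b1, b2, b3⟩ := mz hb
      exact h.no_consec hz b b3 j3
  have hsub : ((nbI G f c x).image (· + 2) ∪ (nbI G f c z).image (· + 1)) ∪ (nbI G f c z) ⊆
      Finset.Icc 1 (c + 2) := by
    intro y hy
    rw [Finset.mem_Icc]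
    rcases Finset.mem_union.1 hy with hy | hy
    · rcases Finset.mem_union.1 hy with hy | hy
      · obtain ⟨b, hb, rfl⟩ := Finset.mem_image.1 hy
        obtain ⟨b1, b2, b3⟩ := mx hb
        omega
      · obtain ⟨b, hb, rfl⟩ := Finset.mem_image.1 hy
        obtain ⟨b1, b2, b3⟩ := mz hb
        omega
    · obtain ⟨b1, b2, b3⟩ := mz hy
      omega
  have := Finset.card_le_card hsub
  rw [Finset.card_union_of_disjoint d2, Finset.card_union_of_disjoint d1, c1, c2] at this
  simp at this
  omega

theorem LCyc.cross_count (h : LCyc G f c) {x z : V} (hx : ∀ i, f i ≠ x) (hz : ∀ i, f i ≠ z)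
    (hxz : x ≠ z) (i : ℕ) (h0 : G.Adj x (f i)) (h1 : G.Adj z (f (i + 1)))
    (hxN : ∀ y, G.Adj x y → ∃ i, f i = y) (hzN : ∀ y, G.Adj z y → ∃ i, f i = y) {δ : ℕ}
    (hδ : ∀ x, δ ≤ (Finset.univ.filter (fun y => G.Adj x y)).card) : 3 * δ ≤ c + 2 := by
  refine (h.shift i).cross_count0 (x := x) (z := z) (fun j => hx _) (fun j => hz _) hxz ?_ h1
    ?_ ?_ hδ
  · rw [h.period]; exact h0
  · intro y hy
    obtain ⟨j, rfl⟩ := hxN y hy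
    obtain ⟨e, -, he⟩ := h.reach i j
    exact ⟨e, he⟩
  · intro y hy
    obtain ⟨j, rfl⟩ := hzN y hy
    obtain ⟨e, -, he⟩ := h.reach i j
    exact ⟨e, he⟩

theorem dom_final (C S A B X : Finset V) (y : V) {δ κ : ℕ} (hS : S.card ≤ κ)
    (hδ : ∀ x, δ ≤ (Finset.univ.filter (fun y => G.Adj x y)).card)
    (hcov : ∀ v, v ∈ S ∨ v ∈ A ∨ v ∈ B)
    (hAB : ∀ a ∈ A, ∀ b ∈ B, a ≠ b ∧ ¬ G.Adj a b) (hB : B.Nonempty) (hXC : X ⊆ C)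
    (hXδ : δ ≤ X.card) (hyX : y ∈ X) (hyA : y ∈ A)
    (hXi : ∀ u ∈ X, ∀ v ∈ X, ¬ G.Adj u v) (hXN : ∀ u ∈ X, ∀ v, G.Adj u v → v ∈ C)
    (hdom : ∀ u v, u ∉ C → v ∉ C → ¬ G.Adj u v) : 3 * δ ≤ C.card + κ := by
  have hv : ∃ v ∈ B, (∀ u, G.Adj v u → u ∉ C → u ∈ S) ∧ (∀ u, G.Adj v u → u ∈ X → u ∈ S) := by
    by_cases hz : ∃ z ∈ X, z ∈ B
    · obtain ⟨z, hzX, hzB⟩ := hz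
      exact ⟨z, hzB, fun u hu huC => absurd (hXN z hzX u hu) huC,
        fun u hu huX => absurd hu (hXi z hzX u huX)⟩
    · push Not at hz
      by_cases hBC : ∃ v ∈ B, v ∉ C
      · obtain ⟨v, hvB, hvC⟩ := hBC
        refine ⟨v, hvB, fun u hu huC => absurd hu (hdom v u hvC huC), fun u hu huX => ?_⟩
        rcases hcov u with h | h | h
        · exact h
        · exact absurd hu.symm (hAB u h v hvB).2
        · exact absurd h (hz u huX)
      · push Not at hBC
        obtain ⟨v, hvB⟩ := hB
        refine ⟨v, hvB, fun u hu huC => ?_, fun u hu huX => ?_⟩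
        · rcases hcov u with h | h | h
          · exact h
          · exact absurd hu.symm (hAB u h v hvB).2
          · exact absurd (hBC u h) huC
        · rcases hcov u with h | h | h
          · exact h
          · exact absurd hu.symm (hAB u h v hvB).2
          · exact absurd h (hz u huX)
  obtain ⟨v, hvB, hv1, hv2⟩ := hv
  set Ny := Finset.univ.filter (fun u => G.Adj y u) with hNy
  set Nv := Finset.univ.filter (fun u => G.Adj v u) with hNv
  have dXy : Disjoint X Ny := by
    rw [Finset.disjoint_left]
    intro u hu hu'
    rw [hNy, Finset.mem_filter] at hu'
    exact hXi y hyX u hu hu'.2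
  have c1 : (X ∪ Ny).card = X.card + Ny.card := Finset.card_union_of_disjoint dXy
  have c2 := Finset.card_union_add_card_inter (X ∪ Ny) (Nv ∩ C)
  have c3 : (X ∪ Ny) ∪ (Nv ∩ C) ⊆ C := by
    intro u hu
    simp only [hNy, Finset.mem_union, Finset.mem_inter, Finset.mem_filter] at hu
    rcases hu with (h | h) | h
    · exact hXC h
    · exact hXN y hyX u h.2
    · exact h.2
  have c4 := Finset.card_le_card c3
  have c5 : (X ∪ Ny) ∩ (Nv ∩ C) ⊆ S ∩ C := by
    intro u hu
    simp only [hNy, hNv, Finset.mem_union, Finset.mem_inter, Finset.mem_filter, Finset.mem_univ,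
      true_and] at hu ⊢
    refine ⟨?_, hu.2.2⟩
    rcases hu.1 with h | h
    · exact hv2 u hu.2.1 h
    · rcases hcov u with h' | h' | h'
      · exact h'
      · exact absurd hu.2.1.symm (hAB u h' v hvB).2
      · exact absurd h (hAB y hyA u h').2
  have c6 := Finset.card_le_card c5
  have c7 := Finset.card_inter_add_card_sdiff Nv C
  have c8 : Nv \ C ⊆ S \ C := by
    intro u hu
    simp only [hNv, Finset.mem_sdiff, Finset.mem_filter, Finset.mem_univ, true_and] at hu ⊢
    exact ⟨hv1 u hu.1 hu.2, hu.2⟩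
  have c9 := Finset.card_le_card c8
  have c10 := Finset.card_inter_add_card_sdiff S C
  have e1 : δ ≤ Ny.card := hδ y
  have e2 : δ ≤ Nv.card := hδ v
  omega

theorem LCyc.dominating (h : LCyc G f c) {x : V} (hx : x ∉ cyc f c) {δ κ : ℕ} (hκ : 2 ≤ κ)
    (hδ : ∀ x, δ ≤ (Finset.univ.filter (fun y => G.Adj x y)).card)
    (hdom : ∀ u v, u ∉ cyc f c → v ∉ cyc f c → ¬ G.Adj u v)
    (hcut : δ ≤ κ ∨ ∃ S A B : Finset V, S.card ≤ κ ∧ (∀ v, v ∈ S ∨ v ∈ A ∨ v ∈ B) ∧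
      (∀ a ∈ A, ∀ b ∈ B, a ≠ b ∧ ¬ G.Adj a b) ∧ A.Nonempty ∧ B.Nonempty) :
    3 * δ ≤ c + κ := by
  have off : ∀ {u : V}, u ∉ cyc f c → (∀ i, f i ≠ u) ∧ ∀ y, G.Adj u y → ∃ i, f i = y := by
    intro u hu
    refine ⟨fun i hi => hu ((h.mem_cyc u).2 ⟨i, hi⟩), fun y hy => ?_⟩
    rw [← h.mem_cyc y]
    by_contra hy'
    exact hdom u y hu hy' hy
  by_cases hbig : 3 * δ ≤ c + 2
  · omega
  have cI := h.card_nbI (off hx).2 (hδ x)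
  have hI : nbI G f c x ⊆ Finset.Icc 1 c := Finset.filter_subset _ _
  set X := (nbI G f c x).image (fun i => f (i + 1)) with hX
  have cX : δ ≤ X.card := by rw [hX, h.card_image hI]; exact cI
  have mX : ∀ u ∈ X, ∃ i, G.Adj x (f i) ∧ f (i + 1) = u := by
    intro u hu
    obtain ⟨i, hi, rfl⟩ := Finset.mem_image.1 hu
    exact ⟨i, (Finset.mem_filter.1 hi).2, rfl⟩
  have hXC : X ⊆ cyc f c := by
    intro u hu
    obtain ⟨i, -, hi⟩ := mX u hu
    exact (h.mem_cyc u).2 ⟨_, hi⟩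
  have hXx : ∀ u ∈ X, ¬ G.Adj x u := by
    intro u hu hxu
    obtain ⟨i, hi, rfl⟩ := mX u hu
    exact h.no_consec (off hx).1 i hi hxu
  have hXi : ∀ u ∈ X, ∀ v ∈ X, ¬ G.Adj u v := by
    intro u hu v hv huv
    obtain ⟨i, hi, rfl⟩ := mX u hu
    obtain ⟨j, hj, rfl⟩ := mX v hv
    by_cases hij : f i = f j
    · rw [h.trans hij 1] at huv
      exact G.loopless.irrefl _ huv
    · exact h.succ_indep (off hx).1 i j hij hi hj huv
  have hXN : ∀ u ∈ X, ∀ v, G.Adj u v → v ∈ cyc f c := by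
    intro u hu v huv
    by_contra hv
    obtain ⟨i, hi, rfl⟩ := mX u hu
    by_cases hxv : x = v
    · subst hxv
      exact hXx _ hu huv.symm
    · exact hbig (h.cross_count (off hx).1 (off hv).1 hxv i hi huv.symm (off hx).2 (off hv).2 hδ)
  have h2δ : 2 * δ ≤ c := by
    have c0 : ((nbI G f c x).image f).card = (nbI G f c x).card := by
      simpa using h.card_image hI 0
    have d : Disjoint X ((nbI G f c x).image f) := by
      rw [Finset.disjoint_left]
      intro u hu hu'
      obtain ⟨i, hi, rfl⟩ := Finset.mem_image.1 hu'
      exact hXx _ hu (Finset.mem_filter.1 hi).2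
    have hs : X ∪ (nbI G f c x).image f ⊆ cyc f c := by
      intro u hu
      rcases Finset.mem_union.1 hu with hu | hu
      · exact hXC hu
      · obtain ⟨i, -, hi⟩ := Finset.mem_image.1 hu
        exact (h.mem_cyc u).2 ⟨i, hi⟩
    have := Finset.card_le_card hs
    rw [Finset.card_union_of_disjoint d, h.card_cyc, c0] at this
    omega
  rcases hcut with hcut | ⟨S, A, B, hS, hcov, hAB, hA, hB⟩
  · omega
  by_cases hXS : X ⊆ S
  · have := Finset.card_le_card hXS
    omega
  rw [Finset.not_subset] at hXS
  obtain ⟨y, hyX, hyS⟩ := hXS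
  have hfin : 3 * δ ≤ (cyc f c).card + κ := by
    rcases hcov y with h' | h' | h'
    · exact absurd h' hyS
    · exact dom_final (cyc f c) S A B X y hS hδ hcov hAB hB hXC cX hyX h' hXi hXN hdom
    · refine dom_final (cyc f c) S B A X y hS hδ (fun v => ?_) (fun a ha b hb => ?_) hA hXC cX
        hyX h' hXi hXN hdom
      · have := hcov v; tauto
      · have := hAB b hb a ha
        exact ⟨this.1.symm, fun hh => this.2 hh.symm⟩
  rw [h.card_cyc] at hfin
  exact hfin

end domcase

/-- `H` is a component with at least two vertices of the graph outside of `C`. -/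
structure Comp (G : SimpleGraph V) (C H : Finset V) : Prop where
  off : ∀ v ∈ H, v ∉ C
  closed : ∀ v ∈ H, ∀ u, u ∉ C → G.Adj v u → u ∈ H
  conn : ∀ D ⊆ H, D ≠ H → D.Nonempty → ∃ v ∈ D, ∃ u ∈ H, u ∉ D ∧ G.Adj v u
  two : 2 ≤ H.card

/-- 3-connectedness in cut form. -/
def Cut3 (G : SimpleGraph V) : Prop :=
  ∀ D S : Finset V, D.Nonempty → S.card ≤ 2 → (∃ v, v ∉ D ∧ v ∉ S) →
    ∃ v ∈ D, ∃ u, u ∉ D ∧ u ∉ S ∧ G.Adj v u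

theorem sum_gaps [DecidableEq V] (T X Y : Finset V) (hX : X ⊆ T) (hY : Y ⊆ T) (gp : V → ℕ)
    (K L : ℕ) (h2 : ∀ u ∈ T, 2 ≤ gp u) (hK : ∀ u ∈ X, K + 2 ≤ gp u)
    (hL : ∀ u ∈ Y, K + L + 2 ≤ gp u) :
    2 * T.card + X.card * K + Y.card * L ≤ ∑ u ∈ T, gp u := by
  have h1 : ∑ u ∈ T, ((2 + if u ∈ X then K else 0) + if u ∈ Y then L else 0) ≤
      ∑ u ∈ T, gp u := by
    apply Finset.sum_le_sum
    intro u hu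
    have := h2 u hu
    split_ifs with hx hy hy
    · have := hL u hy; omega
    · have := hK u hx; omega
    · have := hL u hy; omega
    · omega
  rw [Finset.sum_add_distrib, Finset.sum_add_distrib, Finset.sum_ite_mem, Finset.sum_ite_mem,
    Finset.inter_eq_right.2 hX, Finset.inter_eq_right.2 hY] at h1
  simp only [Finset.sum_const, smul_eq_mul] at h1
  omega

section nondom

variable {G : SimpleGraph V} [Fintype V] [DecidableEq V] [DecidableRel G.Adj]

theorem exists_comp (C : Finset V) (x y : V) (hx : x ∉ C) (hy : y ∉ C) (hxy : G.Adj x y) :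
    ∃ H, Comp G C H := by
  classical
  let P : ℕ → Prop := fun k => ∃ H : Finset V, x ∈ H ∧ (∀ v ∈ H, v ∉ C) ∧
    (∀ v ∈ H, ∀ u, u ∉ C → G.Adj v u → u ∈ H) ∧ H.card = k
  have hP : ∃ k, P k := ⟨_, Cᶜ, by simpa using hx, by simp, by
    intro v _ u hu _; simpa using hu, rfl⟩
  obtain ⟨H, h1, h2, h3, h4⟩ := Nat.find_spec hP
  refine ⟨H, h2, h3, ?_, ?_⟩
  · intro D hD hne hnon
    by_contra hcon
    push Not at hcon
    have hlt : D.card < H.card := Finset.card_lt_card (Finset.ssubset_iff_subset_ne.2 ⟨hD, hne⟩)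
    by_cases hxD : x ∈ D
    · rw [h4] at hlt
      refine Nat.find_min hP hlt ⟨D, hxD, fun v hv => h2 v (hD hv), ?_, rfl⟩
      intro v hv u hu hvu
      by_contra huD
      exact hcon v hv u (h3 v (hD hv) u hu hvu) huD hvu
    · have hlt' : (H \ D).card < H.card := by
        rw [Finset.card_sdiff_of_subset hD]
        have := hnon.card_pos
        omega
      rw [h4] at hlt'
      refine Nat.find_min hP hlt' ⟨H \ D, Finset.mem_sdiff.2 ⟨h1, hxD⟩,
        fun v hv => h2 v (Finset.mem_sdiff.1 hv).1, ?_, rfl⟩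
      intro v hv u hu hvu
      rw [Finset.mem_sdiff] at hv ⊢
      have huH := h3 v hv.1 u hu hvu
      exact ⟨huH, fun huD => hcon u huD v hv.1 hv.2 hvu.symm⟩
  · have hyH := h3 x h1 y hy hxy
    exact Finset.one_lt_card.2 ⟨x, h1, y, hyH, hxy.ne⟩

theorem Comp.path {C H : Finset V} (hH : Comp G C H) {a b : V} (ha : a ∈ H) (hb : b ∈ H) :
    ∃ n, Pth G H a b n := by
  apply conn_path H a b ha
  intro Z hZ haZ hbZ
  exact hH.conn Z hZ (fun h => hbZ (h ▸ hb)) ⟨a, haZ⟩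

/-- attachments of `D` on `C`. -/
def att (G : SimpleGraph V) [DecidableRel G.Adj] (C D : Finset V) : Finset V :=
  C.filter (fun u => ∃ v ∈ D, G.Adj u v)

theorem mem_att {C D : Finset V} {u : V} : u ∈ att G C D ↔ u ∈ C ∧ ∃ v ∈ D, G.Adj u v := by
  unfold att; rw [Finset.mem_filter]

/-- The case when the component `H` has a cut vertex. -/
theorem LCyc.cut_case {f : ℕ → V} {c : ℕ} (h : LCyc G f c) {H : Finset V}
    (hH : Comp G (cyc f c) H) (h3 : Cut3 G) {δ : ℕ} (hδ1 : 1 ≤ δ)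
    (hδ : ∀ x, δ ≤ (Finset.univ.filter (fun y => G.Adj x y)).card)
    (D₀ : Finset V) (w₀ : V) (hD₀ : D₀ ⊆ H) (hne : D₀.Nonempty) (hw₀ : w₀ ∈ H) (hw₀' : w₀ ∉ D₀)
    (hproper : insert w₀ D₀ ≠ H)
    (hcl : ∀ v ∈ D₀, ∀ u ∈ H, G.Adj v u → u ∈ D₀ ∨ u = w₀) :
    3 * δ ≤ c + 3 := by
  classical
  set C := cyc f c with hC
  have hCc : C.card = c := h.card_cyc
  have hc3 := h.c3
  set E₀ := (H \ D₀).erase w₀ with hE₀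
  have hmE : ∀ {x}, x ∈ E₀ ↔ x ∈ H ∧ x ∉ D₀ ∧ x ≠ w₀ := by
    intro x; rw [hE₀, Finset.mem_erase, Finset.mem_sdiff]; tauto
  have hE₀H : E₀ ⊆ H := fun x hx => (hmE.1 hx).1
  have hE₀ne : E₀.Nonempty := by
    by_contra hcon
    rw [Finset.not_nonempty_iff_eq_empty] at hcon
    apply hproper
    apply Finset.Subset.antisymm
    · intro x hx
      rcases Finset.mem_insert.1 hx with rfl | hx
      · exact hw₀
      · exact hD₀ hx
    · intro x hx
      by_contra hx'
      rw [Finset.mem_insert, not_or] at hx'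
      have : x ∈ E₀ := hmE.2 ⟨hx, hx'.2, hx'.1⟩
      rw [hcon] at this
      simp at this
  have hEcl : ∀ v ∈ E₀, ∀ u ∈ H, G.Adj v u → u ∈ E₀ ∨ u = w₀ := by
    intro v hv u hu hvu
    by_contra hcon
    rw [not_or] at hcon
    have hv' := hmE.1 hv
    have huD : u ∈ D₀ := by
      by_contra huD
      exact hcon.1 (hmE.2 ⟨hu, huD, hcon.2⟩)
    rcases hcl u huD v hv'.1 hvu.symm with h' | h'
    · exact hv'.2.1 h'
    · exact hv'.2.2 h'
  have hconn : ∀ D₁ ⊆ H, w₀ ∉ D₁ → ∀ D ⊆ D₁, D.Nonempty → ∃ v ∈ D, ∃ u ∈ H, u ∉ D ∧ G.Adj v u := by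
    intro D₁ hD₁ hw D hD hDne
    exact hH.conn D (hD.trans hD₁) (fun hh => hw (hD (hh ▸ hw₀))) hDne
  have hw₀E : w₀ ∉ E₀ := fun hh => (hmE.1 hh).2.2 rfl
  obtain ⟨D₁, w₁, a1, a2, a3, a4, a5⟩ := exists_leaf G H D₀ w₀ hne hw₀ hw₀' hcl
    (hconn D₀ hD₀ hw₀')
  obtain ⟨D₂, w₂, b1, b2, b3, b4, b5⟩ := exists_leaf G H E₀ w₀ hE₀ne hw₀ hw₀E hEcl
    (hconn E₀ hE₀H hw₀E)
  have hw₁ : w₁ ∉ E₀ := by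
    obtain ⟨v, hv, hvw⟩ := a4.adj
    intro hh
    have := hmE.1 hh
    rcases hcl v (a1 hv) w₁ a3 hvw with h' | h'
    · exact this.2.1 h'
    · exact this.2.2 h'
  have hw₂ : w₂ ∉ D₀ := by
    obtain ⟨v, hv, hvw⟩ := b4.adj
    intro hh
    rcases hEcl v (b1 hv) w₂ b3 hvw with h' | h'
    · exact (hmE.1 h').2.1 hh
    · exact hw₀' (h' ▸ hh)
  have hDD : ∀ x ∈ D₁, x ∉ D₂ := fun x hx hx' => (hmE.1 (b1 hx')).2.1 (a1 hx)
  have hdeg : ∀ (D : Finset V) (w : V), D ⊆ H → (∀ v ∈ D, ∀ u ∈ H, G.Adj v u → u ∈ D ∨ u = w) →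
      ∀ v ∈ D, δ - (att G C D).card ≤ ((insert w D).filter (fun u => G.Adj v u)).card := by
    intro D w hD hDcl v hv
    have hs : Finset.univ.filter (fun y => G.Adj v y) ⊆
        (insert w D).filter (fun u => G.Adj v u) ∪ att G C D := by
      intro u hu
      have hvu := (Finset.mem_filter.1 hu).2
      rw [Finset.mem_union, Finset.mem_filter, Finset.mem_insert, mem_att]
      by_cases huC : u ∈ C
      · exact Or.inr ⟨huC, v, hv, hvu.symm⟩
      · left
        rcases hDcl v hv u (hH.closed v (hD hv) u huC hvu) hvu with h' | h'
        · exact ⟨Or.inr h', hvu⟩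
        · exact ⟨Or.inl h', hvu⟩
    have h1 := (Finset.card_le_card hs).trans (Finset.card_union_le _ _)
    have h2 := hδ v
    omega
  have hD₁H : D₁ ⊆ H := a1.trans hD₀
  have hD₂H : D₂ ⊆ H := b1.trans hE₀H
  obtain ⟨l, hl⟩ := conn_path (G := G) (H \ (D₁ ∪ D₂)) w₁ w₂ (by
      rw [Finset.mem_sdiff, Finset.mem_union, not_or]
      exact ⟨a3, a4.notMem, fun hh => hw₁ (b1 hh)⟩) (by
      intro Z hZ hZ1 hZ2
      have hZm : ∀ x ∈ Z, x ∈ H ∧ x ∉ D₁ ∧ x ∉ D₂ := by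
        intro x hx
        have := hZ hx
        rw [Finset.mem_sdiff, Finset.mem_union, not_or] at this
        exact this
      obtain ⟨v, hv, u, hu, huZ, hvu⟩ := hH.conn (Z ∪ D₁) (by
          intro x hx
          rcases Finset.mem_union.1 hx with hx | hx
          · exact (hZm x hx).1
          · exact hD₁H hx) (by
          intro hh
          have : w₂ ∈ Z ∪ D₁ := hh ▸ b3
          rcases Finset.mem_union.1 this with h' | h'
          · exact hZ2 h'
          · exact hw₂ (a1 h')) ⟨w₁, Finset.mem_union_left _ hZ1⟩
      rw [Finset.mem_union, not_or] at huZ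
      have huD₂ : u ∉ D₂ := by
        intro huD₂
        have hvH : v ∈ H := by
          rcases Finset.mem_union.1 hv with hx | hx
          · exact (hZm v hx).1
          · exact hD₁H hx
        rcases b5 u huD₂ v hvH hvu.symm with h' | h'
        · rcases Finset.mem_union.1 hv with hx | hx
          · exact (hZm v hx).2.2 h'
          · exact hDD v hx h'
        · rcases Finset.mem_union.1 hv with hx | hx
          · exact hZ2 (h' ▸ hx)
          · exact hw₂ (h' ▸ a1 hx)
      rcases Finset.mem_union.1 hv with hv | hv
      · refine ⟨v, hv, u, ?_, huZ.1, hvu⟩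
        rw [Finset.mem_sdiff, Finset.mem_union, not_or]
        exact ⟨hu, huZ.2, huD₂⟩
      · rcases a5 v hv u hu hvu with h' | h'
        · exact absurd h' huZ.2
        · exact absurd (h' ▸ hZ1) huZ.1)
  set T₁ := att G C D₁ with hT₁
  set T₂ := att G C D₂ with hT₂
  obtain ⟨k₁, hk₁⟩ : ∃ k, k = Max.max 1 (δ - T₁.card) := ⟨_, rfl⟩
  obtain ⟨k₂, hk₂⟩ : ∃ k, k = Max.max 1 (δ - T₂.card) := ⟨_, rfl⟩
  have hlong : ∀ a ∈ D₁, ∀ b ∈ D₂, ∃ n, k₁ + k₂ ≤ n ∧ Pth G H a b n := by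
    intro a ha b hb
    obtain ⟨n₁, hn₁, p₁⟩ := leaf_path G _ D₁ w₁ a (δ - T₁.card) rfl a4 ha (hdeg D₁ w₁ hD₁H a5)
    obtain ⟨n₂, hn₂, p₂⟩ := leaf_path G _ D₂ w₂ b (δ - T₂.card) rfl b4 hb (hdeg D₂ w₂ hD₂H b5)
    have q₁ := p₁.pos (fun hh => a4.notMem (hh ▸ ha))
    have q₂ := p₂.pos (fun hh => b4.notMem (hh ▸ hb))
    have j₁ := p₁.join hl (by
      intro x hx hx'
      rw [Finset.mem_sdiff, Finset.mem_union, not_or] at hx'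
      rcases Finset.mem_insert.1 hx with h' | h'
      · exact h'
      · exact absurd h' hx'.2.1)
    have j₂ := j₁.join p₂.symm (by
      intro x hx hx'
      rcases Finset.mem_insert.1 hx' with h' | h'
      · exact h'
      · exfalso
        rcases Finset.mem_union.1 hx with hx | hx
        · rcases Finset.mem_insert.1 hx with h'' | h''
          · exact hw₁ (b1 (h'' ▸ h'))
          · exact hDD x h'' h'
        · rw [Finset.mem_sdiff, Finset.mem_union, not_or] at hx
          exact hx.2.2 h')
    refine ⟨_, ?_, j₂.mono ?_⟩
    · omega
    · intro x hx
      simp only [Finset.mem_union, Finset.mem_insert, Finset.mem_sdiff] at hx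
      rcases hx with ((rfl | hx) | hx) | (rfl | hx)
      · exact a3
      · exact hD₁H hx
      · exact hx.1
      · exact b3
      · exact hD₂H hx
  have hT2 : ∀ (D : Finset V) (w : V), D ⊆ H → D.Nonempty →
      (∀ v ∈ D, ∀ u ∈ H, G.Adj v u → u ∈ D ∨ u = w) → 2 ≤ (att G C D).card := by
    intro D w hD hDne hDcl
    by_contra hlt
    have hex : ∃ v ∈ C, v ∉ insert w (att G C D) := by
      by_contra hcon
      push Not at hcon
      have h1 := Finset.card_le_card (show C ⊆ insert w (att G C D) from hcon)
      have h2 := Finset.card_insert_le w (att G C D)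
      omega
    obtain ⟨v, hvC, hv⟩ := hex
    obtain ⟨x, hx, u, hu, hu', hxu⟩ := h3 D (insert w (att G C D)) hDne
      (by have := Finset.card_insert_le w (att G C D); omega)
      ⟨v, fun hh => hH.off v (hD hh) hvC, hv⟩
    rw [Finset.mem_insert, not_or] at hu'
    by_cases huC : u ∈ C
    · exact hu'.2 (mem_att.2 ⟨huC, x, hx, hxu.symm⟩)
    · rcases hDcl x hx u (hH.closed x (hD hx) u huC hxu) hxu with h' | h'
      · exact hu h'
      · exact hu'.1 h'
  have c₁ : 2 ≤ T₁.card := hT2 D₁ w₁ hD₁H a2 a5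
  have c₂ : 2 ≤ T₂.card := hT2 D₂ w₂ hD₂H b2 b5
  have hTC : T₁ ∪ T₂ ⊆ C := by
    intro x hx
    rcases Finset.mem_union.1 hx with hx | hx
    · exact (mem_att.1 hx).1
    · exact (mem_att.1 hx).1
  obtain ⟨nxt, gp, g1, g2, g3⟩ := h.gaps (T₁ ∪ T₂) hTC
    (c₁.trans (Finset.card_le_card Finset.subset_union_left))
  have hattH : ∀ u ∈ T₁ ∪ T₂, ∃ v ∈ H, G.Adj u v := by
    intro u hu
    rcases Finset.mem_union.1 hu with hx | hx
    · obtain ⟨-, v, hv, huv⟩ := mem_att.1 hx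
      exact ⟨v, hD₁H hv, huv⟩
    · obtain ⟨-, v, hv, huv⟩ := mem_att.1 hx
      exact ⟨v, hD₂H hv, huv⟩
  have hgap2 : ∀ u ∈ T₁ ∪ T₂, 2 ≤ gp u := by
    intro u hu
    obtain ⟨a, ha, hua⟩ := hattH u hu
    obtain ⟨b, hb, hub⟩ := hattH _ (g1 u hu).1
    obtain ⟨n, hn⟩ := hH.path ha hb
    have := (g1 u hu).2 H a b n hH.off hn hua hub.symm
    omega
  set X := (T₁ ∪ T₂).filter (fun u => (u ∈ T₁ ∧ nxt u ∈ T₂) ∨ (u ∈ T₂ ∧ nxt u ∈ T₁)) with hX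
  have hgapX : ∀ u ∈ X, k₁ + k₂ + 2 ≤ gp u := by
    intro u hu
    rw [hX, Finset.mem_filter] at hu
    rcases hu.2 with ⟨hu1, hu2⟩ | ⟨hu1, hu2⟩
    · obtain ⟨-, a, ha, hua⟩ := mem_att.1 hu1
      obtain ⟨-, b, hb, hub⟩ := mem_att.1 hu2
      obtain ⟨n, hn, hp⟩ := hlong a ha b hb
      have := (g1 u hu.1).2 H a b n hH.off hp hua hub.symm
      omega
    · obtain ⟨-, a, ha, hua⟩ := mem_att.1 hu1
      obtain ⟨-, b, hb, hub⟩ := mem_att.1 hu2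
      obtain ⟨n, hn, hp⟩ := hlong b hb a ha
      have := (g1 u hu.1).2 H a b n hH.off hp.symm hua hub.symm
      omega
  have hXm : (T₁ ∩ T₂).card ≤ X.card := by
    apply Finset.card_le_card
    intro u hu
    rw [Finset.mem_inter] at hu
    have huU := Finset.mem_union_left T₂ hu.1
    rw [hX, Finset.mem_filter]
    refine ⟨huU, ?_⟩
    rcases Finset.mem_union.1 (g1 u huU).1 with h' | h'
    · exact Or.inr ⟨hu.2, h'⟩
    · exact Or.inl ⟨hu.1, h'⟩
  have hX2 : 2 ≤ X.card := by
    have hgen : ∀ P ⊆ T₁ ∪ T₂, P.Nonempty → P ≠ T₁ ∪ T₂ →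
        (∀ u ∈ P, ∀ v ∈ T₁ ∪ T₂, v ∉ P → (u ∈ T₁ ∧ v ∈ T₂) ∨ (u ∈ T₂ ∧ v ∈ T₁)) →
        2 ≤ X.card := by
      intro P hP hPne hPT hcr
      obtain ⟨u, hu, hu'⟩ := g3 P hP hPne hPT
      obtain ⟨v, hv, hv'⟩ := g3 ((T₁ ∪ T₂) \ P) Finset.sdiff_subset (by
        rw [Finset.sdiff_nonempty]
        exact fun hh => hPT (Finset.Subset.antisymm hP hh)) (by
        intro hh
        obtain ⟨x, hx⟩ := hPne
        have : x ∈ (T₁ ∪ T₂) \ P := by rw [hh]; exact hP hx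
        exact (Finset.mem_sdiff.1 this).2 hx)
      rw [Finset.mem_sdiff] at hv
      have hvn : nxt v ∈ P := by
        by_contra hh
        exact hv' (Finset.mem_sdiff.2 ⟨(g1 v hv.1).1, hh⟩)
      refine Finset.one_lt_card.2 ⟨u, ?_, v, ?_, fun hh => hv.2 (hh ▸ hu)⟩
      · rw [hX, Finset.mem_filter]
        exact ⟨hP hu, hcr u hu _ (g1 u (hP hu)).1 hu'⟩
      · rw [hX, Finset.mem_filter]
        refine ⟨hv.1, ?_⟩
        have := hcr _ hvn v hv.1 hv.2
        tauto
    by_cases hm : (T₁ ∩ T₂).Nonempty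
    · obtain ⟨u, hu⟩ := hm
      rw [Finset.mem_inter] at hu
      have huU := Finset.mem_union_left T₂ hu.1
      refine hgen {u} (by simpa using huU) (by simp) ?_ ?_
      · intro hh
        have h1 : (T₁ ∪ T₂).card = 1 := by rw [← hh]; simp
        have h2 := Finset.card_le_card (Finset.subset_union_left : T₁ ⊆ T₁ ∪ T₂)
        omega
      · intro x hx v hv _
        rw [Finset.mem_singleton] at hx
        subst hx
        rcases Finset.mem_union.1 hv with h' | h'
        · exact Or.inr ⟨hu.2, h'⟩
        · exact Or.inl ⟨hu.1, h'⟩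
    · rw [Finset.not_nonempty_iff_eq_empty, ← Finset.disjoint_iff_inter_eq_empty] at hm
      refine hgen T₁ Finset.subset_union_left (Finset.card_pos.1 (by omega)) ?_ ?_
      · intro hh
        obtain ⟨x, hx⟩ := Finset.card_pos.1 (by omega : 0 < T₂.card)
        have : x ∈ T₁ := hh ▸ Finset.mem_union_right _ hx
        exact Finset.disjoint_left.1 hm this hx
      · intro u hu v hv hv'
        exact Or.inl ⟨hu, (Finset.mem_union.1 hv).resolve_left hv'⟩
  have hsum : 2 * (T₁ ∪ T₂).card + X.card * (k₁ + k₂) ≤ c := by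
    refine le_trans ?_ g2
    have := sum_gaps (T₁ ∪ T₂) X ∅ (Finset.filter_subset _ _) (Finset.empty_subset _) gp (k₁ + k₂) 0
      hgap2 hgapX (by simp)
    simpa using this
  have hui := Finset.card_union_add_card_inter T₁ T₂
  have e1 : 1 ≤ k₁ ∧ δ ≤ k₁ + T₁.card := by omega
  have e2 : 1 ≤ k₂ ∧ δ ≤ k₂ + T₂.card := by omega
  obtain ⟨g, hg⟩ : ∃ g, X.card = g + 2 := ⟨X.card - 2, by omega⟩
  obtain ⟨K, hK⟩ : ∃ K, k₁ + k₂ = K + 2 := ⟨k₁ + k₂ - 2, by omega⟩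
  rw [hg, hK] at hsum
  have : (g + 2) * (K + 2) = g * K + 2 * g + 2 * K + 4 := by ring
  have h0 : 0 ≤ g * K := Nat.zero_le _
  omega

end nondom

section blockcase

variable {G : SimpleGraph V} [Fintype V] [DecidableEq V] [DecidableRel G.Adj]

/-- a component without cut vertex is a leaf at each of its vertices. -/
theorem Comp.leaf {C H : Finset V} (hH : Comp G C H)
    (hno : ∀ (D : Finset V) (w : V), D ⊆ H → D.Nonempty → w ∈ H → w ∉ D → insert w D ≠ H →
      (∀ v ∈ D, ∀ u ∈ H, G.Adj v u → u ∈ D ∨ u = w) → False) {w : V} (hw : w ∈ H) :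
    Leaf G (H.erase w) w := by
  refine ⟨by simp, ?_, ?_⟩
  · obtain ⟨v, hv, u, hu, huD, hvu⟩ := hH.conn (H.erase w) (Finset.erase_subset _ _)
      (fun hh => by rw [← hh] at hw; simp at hw)
      (Finset.card_pos.1 (by rw [Finset.card_erase_of_mem hw]; have := hH.two; omega))
    have : u = w := by
      by_contra hne
      exact huD (Finset.mem_erase.2 ⟨hne, hu⟩)
    exact ⟨v, hv, this ▸ hvu⟩
  · intro D' hD' hne hnon z hz
    rw [Finset.insert_erase hw]
    by_contra hcon
    push Not at hcon
    have hwD : w ∉ D' := fun hh => by simpa using hD' hh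
    have hDH : D' ⊆ H := hD'.trans (Finset.erase_subset _ _)
    have hcl : ∀ v ∈ D', ∀ u ∈ H, G.Adj v u → u ∈ D' ∨ u = z := by
      intro v hv u hu hvu
      by_contra hh
      rw [not_or] at hh
      exact hcon v hv u hu hh.1 hh.2 hvu
    by_cases hzH : z ∈ H
    · refine hno D' z hDH hnon hzH hz (fun hh => ?_) hcl
      have hwz : w ∈ insert z D' := hh ▸ hw
      rcases Finset.mem_insert.1 hwz with h' | h'
      · apply hne
        rw [← hh, h', Finset.erase_insert hz]
      · exact hwD h'
    · obtain ⟨v, hv, u, hu, huD, hvu⟩ := hH.conn D' hDH (fun hh => hwD (hh ▸ hw)) hnon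
      rcases hcl v hv u hu hvu with h' | h'
      · exact huD h'
      · exact hzH (h' ▸ hu)

theorem block_arith {δ t t2 p0 p1 g E F c : ℕ} (h10 : p1 ≤ p0) (ht : t2 + p0 + p1 ≤ t)
    (hE1 : 1 ≤ E) (hE : δ ≤ E + t2 + p0) (hF : δ ≤ F + t2 + p1) (hEF : E ≤ F)
    (hg : t2 ≤ g) (hc : 2 * t + g * E ≤ c)
    (hB : t2 + p1 + 2 ≤ δ → 3 ≤ g ∧ (p0 = 0 ∨ 2 * t + g * E + 2 * (F - E) ≤ c)) :
    3 * δ ≤ c + 3 := by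
  by_cases hA : t2 + p1 + 2 ≤ δ
  · obtain ⟨hg3, hor⟩ := hB hA
    obtain ⟨g', rfl⟩ : ∃ g', g = g' + 3 := ⟨g - 3, by omega⟩
    obtain ⟨E', rfl⟩ : ∃ E', E = E' + 1 := ⟨E - 1, by omega⟩
    have h1 : (g' + 3) * (E' + 1) = g' * E' + g' + 3 * E' + 3 := by ring
    have h0 : 0 ≤ g' * E' := Nat.zero_le _
    rcases hor with h | h <;> omega
  · have h1 : g * 1 ≤ g * E := Nat.mul_le_mul_left _ hE1
    omega

/-- The case when the component `H` has no cut vertex. -/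
theorem LCyc.block_case {f : ℕ → V} {c : ℕ} (h : LCyc G f c) {H : Finset V}
    (hH : Comp G (cyc f c) H) (h3 : Cut3 G) {δ : ℕ}
    (hδ : ∀ x, δ ≤ (Finset.univ.filter (fun y => G.Adj x y)).card)
    (hno : ∀ (D : Finset V) (w : V), D ⊆ H → D.Nonempty → w ∈ H → w ∉ D → insert w D ≠ H →
      (∀ v ∈ D, ∀ u ∈ H, G.Adj v u → u ∈ D ∨ u = w) → False) :
    3 * δ ≤ c + 3 := by
  classical
  set C := cyc f c with hC
  have hCc : C.card = c := h.card_cyc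
  have hc3 := h.c3
  have hHtwo := hH.two
  set T := att G C H with hT
  have hTC : T ⊆ C := fun x hx => (mem_att.1 hx).1
  let nb : V → Finset V := fun u => H.filter (fun v => G.Adj u v)
  have hnb : ∀ {u v}, v ∈ nb u ↔ v ∈ H ∧ G.Adj u v := by
    intro u v; exact Finset.mem_filter
  have hnbT : ∀ u ∈ T, ∃ v, v ∈ nb u := by
    intro u hu
    obtain ⟨-, v, hv, huv⟩ := mem_att.1 hu
    exact ⟨v, hnb.2 ⟨hv, huv⟩⟩
  have hTm : ∀ {u v}, v ∈ H → u ∈ C → G.Adj v u → u ∈ T ∧ v ∈ nb u := by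
    intro u v hv hu hvu
    exact ⟨mem_att.2 ⟨hu, v, hv, hvu.symm⟩, hnb.2 ⟨hv, hvu.symm⟩⟩
  have hCout : ∀ S : Finset V, S.card ≤ 2 → ∃ v ∈ C, v ∉ S := by
    intro S hS
    by_contra hcon
    push Not at hcon
    have h1 := Finset.card_le_card (show C ⊆ S from hcon)
    omega
  have hT2c : 2 ≤ T.card := by
    by_contra hlt
    obtain ⟨v, hvC, hv⟩ := hCout T (by omega)
    obtain ⟨x, hx, u, hu, hu', hxu⟩ := h3 H T (Finset.card_pos.1 (by omega)) (by omega)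
      ⟨v, fun hh => hH.off v hh hvC, hv⟩
    by_cases huC : u ∈ C
    · exact hu' (hTm hx huC hxu).1
    · exact hu (hH.closed x hx u huC hxu)
  obtain ⟨nxt, gp, g1, g2, g3⟩ := h.gaps T hTC hT2c
  set T2 := T.filter (fun u => 2 ≤ (nb u).card) with hT2
  have hmT2 : ∀ {u}, u ∈ T2 ↔ u ∈ T ∧ 2 ≤ (nb u).card := by
    intro u; rw [hT2, Finset.mem_filter]
  let P : V → Finset V := fun a => T.filter (fun u => nb u = {a})
  have hmP : ∀ {a u}, u ∈ P a ↔ u ∈ T ∧ nb u = {a} := by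
    intro a u; exact Finset.mem_filter
  have hPT : ∀ a, P a ⊆ T := fun a => Finset.filter_subset _ _
  have hcase : ∀ {u v}, u ∈ T → v ∈ nb u → u ∈ T2 ∨ u ∈ P v := by
    intro u v hu hv
    by_cases h2 : 2 ≤ (nb u).card
    · exact Or.inl (hmT2.2 ⟨hu, h2⟩)
    · right
      refine hmP.2 ⟨hu, ?_⟩
      have h1 : (nb u).card = 1 := by
        have := Finset.card_pos.2 ⟨v, hv⟩
        omega
      obtain ⟨a, ha⟩ := Finset.card_eq_one.1 h1
      rw [ha] at hv ⊢
      rw [Finset.mem_singleton.1 hv]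
  have hother : ∀ {u} a, u ∈ T → u ∉ P a → ∃ b ∈ nb u, b ≠ a := by
    intro u a hu huP
    by_contra hcon
    push Not at hcon
    apply huP
    refine hmP.2 ⟨hu, ?_⟩
    obtain ⟨v, hv⟩ := hnbT u hu
    have hva := hcon v hv
    subst hva
    exact Finset.eq_singleton_iff_unique_mem.2 ⟨hv, hcon⟩
  have hHne : H.Nonempty := Finset.card_pos.1 (by omega)
  obtain ⟨h0, hh0, hmax0⟩ := Finset.exists_max_image H (fun a => (P a).card) hHne
  have hHe : (H.erase h0).Nonempty :=
    Finset.card_pos.1 (by rw [Finset.card_erase_of_mem hh0]; omega)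
  obtain ⟨h1, hh1, hmax1⟩ := Finset.exists_max_image (H.erase h0) (fun a => (P a).card) hHe
  have hh1' := Finset.mem_erase.1 hh1
  have hdegH : ∀ v ∈ H, δ ≤ (H.filter (fun u => G.Adj v u)).card + T2.card + (P v).card := by
    intro v hv
    have hs : Finset.univ.filter (fun y => G.Adj v y) ⊆
        (H.filter (fun u => G.Adj v u) ∪ T2) ∪ P v := by
      intro u hu
      have hvu := (Finset.mem_filter.1 hu).2
      rw [Finset.mem_union, Finset.mem_union, Finset.mem_filter]
      by_cases huC : u ∈ C
      · obtain ⟨hu1, hu2⟩ := hTm hv huC hvu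
        rcases hcase hu1 hu2 with h' | h'
        · exact Or.inl (Or.inr h')
        · exact Or.inr h'
      · exact Or.inl (Or.inl ⟨hH.closed v hv u huC hvu, hvu⟩)
    have e1 := (Finset.card_le_card hs).trans (Finset.card_union_le _ _)
    have e2 := Finset.card_union_le (H.filter (fun u => G.Adj v u)) T2
    have e3 := hδ v
    omega
  obtain ⟨E, hE⟩ : ∃ k, k = Max.max 1 (δ - T2.card - (P h0).card) := ⟨_, rfl⟩
  obtain ⟨F, hF⟩ : ∃ k, k = Max.max 1 (δ - T2.card - (P h1).card) := ⟨_, rfl⟩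
  have h10 : (P h1).card ≤ (P h0).card := hmax0 h1 hh1'.2
  have hpathE : ∀ a ∈ H, ∀ b ∈ H, a ≠ b → ∃ n, E ≤ n ∧ Pth G H a b n := by
    intro a ha b hb hab
    obtain ⟨n, hn, p⟩ := leaf_path G _ (H.erase b) b a (δ - T2.card - (P h0).card) rfl
      (hH.leaf hno hb) (Finset.mem_erase.2 ⟨hab, ha⟩) (by
        intro v hv
        rw [Finset.insert_erase hb]
        have hvH := (Finset.mem_erase.1 hv).2
        have e1 := hdegH v hvH
        have e2 : (P v).card ≤ (P h0).card := hmax0 v hvH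
        omega)
    rw [Finset.insert_erase hb] at p
    have := p.pos hab
    exact ⟨n, by omega, p⟩
  have hpathF : ∀ a ∈ H, a ≠ h0 → ∃ n, F ≤ n ∧ Pth G H a h0 n := by
    intro a ha hab
    obtain ⟨n, hn, p⟩ := leaf_path G _ (H.erase h0) h0 a (δ - T2.card - (P h1).card) rfl
      (hH.leaf hno hh0) (Finset.mem_erase.2 ⟨hab, ha⟩) (by
        intro v hv
        rw [Finset.insert_erase hh0]
        have e1 := hdegH v (Finset.mem_erase.1 hv).2
        have e2 : (P v).card ≤ (P h1).card := hmax1 v hv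
        omega)
    rw [Finset.insert_erase hh0] at p
    have := p.pos hab
    exact ⟨n, by omega, p⟩
  have hgap2 : ∀ u ∈ T, 2 ≤ gp u := by
    intro u hu
    obtain ⟨a, ha⟩ := hnbT u hu
    obtain ⟨b, hb⟩ := hnbT _ (g1 u hu).1
    rw [hnb] at ha hb
    obtain ⟨n, hn⟩ := hH.path ha.1 hb.1
    have := (g1 u hu).2 H a b n hH.off hn ha.2 hb.2.symm
    omega
  set X := T.filter (fun u => ∃ a ∈ nb u, ∃ b ∈ nb (nxt u), a ≠ b) with hX
  have hmX : ∀ {u}, u ∈ X ↔ u ∈ T ∧ ∃ a ∈ nb u, ∃ b ∈ nb (nxt u), a ≠ b := by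
    intro u; rw [hX, Finset.mem_filter]
  have hXT : X ⊆ T := Finset.filter_subset _ _
  have hgapX : ∀ u ∈ X, E + 2 ≤ gp u := by
    intro u hu
    obtain ⟨huT, a, ha, b, hb, hab⟩ := hmX.1 hu
    rw [hnb] at ha hb
    obtain ⟨n, hn, hp⟩ := hpathE a ha.1 b hb.1 hab
    have := (g1 u huT).2 H a b n hH.off hp ha.2 hb.2.symm
    omega
  have hT2X : T2 ⊆ X := by
    intro u hu
    obtain ⟨huT, hu2⟩ := hmT2.1 hu
    obtain ⟨b, hb⟩ := hnbT _ (g1 u huT).1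
    obtain ⟨a, ha, hab⟩ := Finset.exists_mem_ne (by omega : 1 < (nb u).card) b
    exact hmX.2 ⟨huT, a, ha, b, hb, hab⟩
  have hPne : ∀ a ∈ H, P a ≠ T := by
    intro a ha hPa
    obtain ⟨v, hvC, hv⟩ := hCout {a} (by simp)
    obtain ⟨x, hx, u, hu, hu', hxu⟩ := h3 (H.erase a) {a}
      (Finset.card_pos.1 (by rw [Finset.card_erase_of_mem ha]; omega)) (by simp)
      ⟨v, fun hh => hH.off v (Finset.mem_erase.1 hh).2 hvC, hv⟩
    rw [Finset.mem_erase] at hx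
    rw [Finset.mem_singleton] at hu'
    by_cases huC : u ∈ C
    · obtain ⟨hu1, hu2⟩ := hTm hx.2 huC hxu
      rw [← hPa, hmP] at hu1
      rw [hu1.2, Finset.mem_singleton] at hu2
      exact hx.1 hu2
    · exact hu (Finset.mem_erase.2 ⟨hu', hH.closed x hx.2 u huC hxu⟩)
  have hPnb : ∀ {a u}, u ∈ P a → a ∈ nb u := by
    intro a u hu
    rw [(hmP.1 hu).2]
    simp
  have hexit : ∀ a ∈ H, (P a).Nonempty → ∃ u ∈ P a, u ∈ X ∧ ∃ b ∈ nb (nxt u), b ≠ a := by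
    intro a ha hPa
    obtain ⟨u, hu, hu'⟩ := g3 (P a) (hPT a) hPa (hPne a ha)
    obtain ⟨b, hb, hba⟩ := hother a (g1 u (hPT a hu)).1 hu'
    exact ⟨u, hu, hmX.2 ⟨hPT a hu, a, hPnb hu, b, hb, hba.symm⟩, b, hb, hba⟩
  have hcT : T2.card + (P h0).card + (P h1).card ≤ T.card := by
    have d1 : Disjoint T2 (P h0) := by
      rw [Finset.disjoint_left]
      intro u hu hu'
      have e1 := (hmT2.1 hu).2
      rw [(hmP.1 hu').2, Finset.card_singleton] at e1
      omega
    have d2 : Disjoint (T2 ∪ P h0) (P h1) := by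
      rw [Finset.disjoint_left]
      intro u hu hu'
      have e2 := (hmP.1 hu').2
      rcases Finset.mem_union.1 hu with hu | hu
      · have e1 := (hmT2.1 hu).2
        rw [e2, Finset.card_singleton] at e1
        omega
      · have e1 := (hmP.1 hu).2
        rw [e2, Finset.singleton_inj] at e1
        exact hh1'.1 e1
    rw [← Finset.card_union_of_disjoint d1, ← Finset.card_union_of_disjoint d2]
    apply Finset.card_le_card
    exact Finset.union_subset (Finset.union_subset (Finset.filter_subset _ _) (hPT _)) (hPT _)
  have hX3 : 3 ≤ H.card → 3 ≤ X.card := by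
    intro hH3
    set A1 := H.filter (fun a => (P a).Nonempty) with hA1
    have hmA : ∀ {a}, a ∈ A1 ↔ a ∈ H ∧ (P a).Nonempty := by
      intro a; rw [hA1, Finset.mem_filter]
    have hcov : 3 ≤ (T2 ∪ A1).card := by
      by_contra hlt
      obtain ⟨v, hvC, hv⟩ := hCout (T2 ∪ A1) (by omega)
      have hDne : (H \ (T2 ∪ A1)).Nonempty := by
        rw [Finset.sdiff_nonempty]
        intro hh
        have := Finset.card_le_card hh
        omega
      obtain ⟨x, hx, u, hu, hu', hxu⟩ := h3 (H \ (T2 ∪ A1)) (T2 ∪ A1) hDne (by omega)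
        ⟨v, fun hh => hH.off v (Finset.mem_sdiff.1 hh).1 hvC, hv⟩
      rw [Finset.mem_sdiff] at hx
      by_cases huC : u ∈ C
      · obtain ⟨hu1, hu2⟩ := hTm hx.1 huC hxu
        rcases hcase hu1 hu2 with h' | h'
        · exact hu' (Finset.mem_union_left _ h')
        · exact hx.2 (Finset.mem_union_right _ (hmA.2 ⟨hx.1, u, h'⟩))
      · exact hu (Finset.mem_sdiff.2 ⟨hH.closed x hx.1 u huC hxu, hu'⟩)
    have hex : ∀ a, ∃ u, a ∈ A1 → u ∈ P a ∧ u ∈ X := by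
      intro a
      by_cases ha : a ∈ A1
      · obtain ⟨u, hu, huX, -⟩ := hexit a (hmA.1 ha).1 (hmA.1 ha).2
        exact ⟨u, fun _ => ⟨hu, huX⟩⟩
      · exact ⟨a, fun hh => absurd hh ha⟩
    choose ex hex using hex
    have hinj : (A1.image ex).card = A1.card := by
      apply Finset.card_image_of_injOn
      intro a ha b hb hab
      have e1 := (hmP.1 (hex a ha).1).2
      have e2 := (hmP.1 (hex b hb).1).2
      have hab' : ex a = ex b := hab
      rw [hab', e2, Finset.singleton_inj] at e1
      exact e1.symm
    have hdis : Disjoint T2 (A1.image ex) := by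
      rw [Finset.disjoint_left]
      intro u hu hu'
      obtain ⟨a, ha, rfl⟩ := Finset.mem_image.1 hu'
      have e1 := (hmT2.1 hu).2
      rw [(hmP.1 (hex a ha).1).2, Finset.card_singleton] at e1
      omega
    have hsub : T2 ∪ A1.image ex ⊆ X := by
      apply Finset.union_subset hT2X
      intro u hu
      obtain ⟨a, ha, rfl⟩ := Finset.mem_image.1 hu
      exact (hex a ha).2
    have e1 := Finset.card_le_card hsub
    rw [Finset.card_union_of_disjoint hdis, hinj] at e1
    have e2 := Finset.card_union_le T2 A1
    omega
  have hEF : E ≤ F := by omega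
  refine block_arith (t := T.card) (t2 := T2.card) (p0 := (P h0).card) (p1 := (P h1).card)
    (g := X.card) (E := E) (F := F) h10 hcT (by omega) (by omega) (by omega) hEF
    (Finset.card_le_card hT2X) ?_ ?_
  · have := sum_gaps T X ∅ hXT (Finset.empty_subset _) gp E 0 hgap2 hgapX (by simp)
    simp only [Finset.card_empty, zero_mul, add_zero] at this
    omega
  · intro hB
    refine ⟨hX3 ?_, ?_⟩
    · have e1 := hdegH h1 hh1'.2
      have e2 : (H.filter (fun u => G.Adj h1 u)).card < H.card := by
        apply Finset.card_lt_card
        rw [Finset.filter_ssubset]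
        exact ⟨h1, hh1'.2, G.irrefl⟩
      omega
    · by_cases hp0 : (P h0).card = 0
      · exact Or.inl hp0
      right
      have hPn : (P h0).Nonempty := Finset.card_pos.1 (by omega)
      obtain ⟨u, hu, huX, b, hb, hb0⟩ := hexit h0 hh0 hPn
      obtain ⟨v, hv, hv'⟩ := g3 (T \ P h0) Finset.sdiff_subset (by
        rw [Finset.sdiff_nonempty]
        exact fun hh => hPne h0 hh0 (Finset.Subset.antisymm (hPT _) hh)) (by
        intro hh
        obtain ⟨x, hx⟩ := hPn
        have : x ∈ T \ P h0 := by rw [hh]; exact hPT _ hx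
        exact (Finset.mem_sdiff.1 this).2 hx)
      rw [Finset.mem_sdiff] at hv
      have hvn : nxt v ∈ P h0 := by
        by_contra hh
        exact hv' (Finset.mem_sdiff.2 ⟨(g1 v hv.1).1, hh⟩)
      obtain ⟨a, ha, ha0⟩ := hother h0 hv.1 hv.2
      have huv : u ≠ v := fun hh => hv.2 (hh ▸ hu)
      have gu : F + 2 ≤ gp u := by
        have e := hnb.1 (hPnb hu)
        rw [hnb] at hb
        obtain ⟨n, hn, p⟩ := hpathF b hb.1 hb0
        have := (g1 u (hPT _ hu)).2 H h0 b n hH.off p.symm e.2 hb.2.symm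
        omega
      have gv : F + 2 ≤ gp v := by
        have e := hnb.1 (hPnb hvn)
        rw [hnb] at ha
        obtain ⟨n, hn, p⟩ := hpathF a ha.1 ha0
        have := (g1 v hv.1).2 H a h0 n hH.off p ha.2 e.2.symm
        omega
      have := sum_gaps T X {u, v} hXT (by
          intro x hx
          rw [Finset.mem_insert, Finset.mem_singleton] at hx
          rcases hx with rfl | rfl
          · exact hPT _ hu
          · exact hv.1) gp E (F - E) hgap2 hgapX (by
          intro x hx
          rw [Finset.mem_insert, Finset.mem_singleton] at hx
          rcases hx with rfl | rfl <;> omega)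
      rw [Finset.card_pair huv] at this
      omega

theorem LCyc.nondom {f : ℕ → V} {c : ℕ} (h : LCyc G f c) (h3 : Cut3 G) {δ : ℕ} (hδ1 : 1 ≤ δ)
    (hδ : ∀ x, δ ≤ (Finset.univ.filter (fun y => G.Adj x y)).card)
    {x y : V} (hx : x ∉ cyc f c) (hy : y ∉ cyc f c) (hxy : G.Adj x y) :
    3 * δ ≤ c + 3 := by
  obtain ⟨H, hH⟩ := exists_comp (cyc f c) x y hx hy hxy
  by_contra hcon
  apply hcon
  refine h.block_case hH h3 hδ ?_
  intro D w a1 a2 a3 a4 a5 a6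
  exact hcon (h.cut_case hH h3 hδ1 hδ D w a1 a2 a3 a4 a5 a6)

end blockcase

section assembly

variable {G : SimpleGraph V} [Fintype V]

theorem KConnected.cut (k : ℕ) (hk : KConnected G k) (D S : Finset V) (hD : D.Nonempty)
    (hS : S.card < k) (hout : ∃ v, v ∉ D ∧ v ∉ S) :
    ∃ v ∈ D, ∃ u, u ∉ D ∧ u ∉ S ∧ G.Adj v u := by
  classical
  obtain ⟨q, hqD, hqS⟩ := hout
  obtain ⟨p, hp⟩ := hD
  have hcon := hk.2 (S \ D) (lt_of_le_of_lt (Finset.card_le_card Finset.sdiff_subset) hS)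
  have hp' : p ∈ ((↑(S \ D) : Set V)ᶜ) := by simp [hp]
  have hq' : q ∈ ((↑(S \ D) : Set V)ᶜ) := by simp [hqS]
  obtain ⟨w⟩ := hcon.preconnected ⟨p, hp'⟩ ⟨q, hq'⟩
  obtain ⟨d, -, hd1, hd2⟩ := w.exists_boundary_dart {x | x.1 ∈ D} hp hqD
  have hd2' : d.snd.1 ∉ D := hd2
  refine ⟨d.fst.1, hd1, d.snd.1, hd2', ?_, d.adj⟩
  intro hh
  have := d.snd.2
  simp [hh, hd2'] at this

theorem KConnected.degree [DecidableRel G.Adj] (k : ℕ) (hk : KConnected G k) (v : V) :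
    k ≤ (Finset.univ.filter (fun y => G.Adj v y)).card := by
  classical
  by_contra hlt
  have hout : ∃ u, u ∉ ({v} : Finset V) ∧ u ∉ Finset.univ.filter (fun y => G.Adj v y) := by
    by_contra hcon
    push Not at hcon
    have hs : (Finset.univ : Finset V) ⊆ insert v (Finset.univ.filter (fun y => G.Adj v y)) := by
      intro u _
      by_cases huv : u = v
      · simp [huv]
      · exact Finset.mem_insert_of_mem (hcon u (by simpa using huv))
    have h1 := Finset.card_le_card hs
    have h2 := Finset.card_insert_le v (Finset.univ.filter (fun y => G.Adj v y))
    have h3 := hk.1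
    rw [Finset.card_univ] at h1
    omega
  obtain ⟨x, hx, u, hu, hu', hxu⟩ := hk.cut k {v} _ (by simp) (by omega) hout
  rw [Finset.mem_singleton] at hx
  subst hx
  exact hu' (by simpa using hxu)

theorem exists_lcyc_of_walk {v : V} (w : G.Walk v v) (hw : w.IsCycle)
    (hl : w.length = circumference G) : ∃ f, LCyc G f (circumference G) := by
  have h3 := hw.three_le_length
  rw [hl] at h3
  obtain ⟨c, hc⟩ : ∃ c, c = circumference G := ⟨_, rfl⟩
  rw [← hc] at h3 hl ⊢
  refine ⟨fun i => w.getVert (i % c), h3, ?_, ?_, ?_⟩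
  · intro i
    have hi := Nat.mod_lt i (by omega : 0 < c)
    have hadj := w.adj_getVert_succ (i := i % c) (by omega)
    by_cases hlast : i % c + 1 = c
    · have e1 : (i + 1) % c = 0 := by
        rw [Nat.add_mod, Nat.mod_eq_of_lt (by omega : 1 < c), hlast, Nat.mod_self]
      show G.Adj (w.getVert (i % c)) (w.getVert ((i + 1) % c))
      rw [e1, Walk.getVert_zero]
      rw [hlast, ← hl, Walk.getVert_length] at hadj
      rw [← hl]
      exact hadj
    · have e1 : (i + 1) % c = i % c + 1 := by
        rw [Nat.add_mod, Nat.mod_eq_of_lt (by omega : 1 < c), Nat.mod_eq_of_lt (by omega)]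
      show G.Adj (w.getVert (i % c)) (w.getVert ((i + 1) % c))
      rw [e1]
      exact hadj
  · intro i j
    have hi := Nat.mod_lt i (by omega : 0 < c)
    have hj := Nat.mod_lt j (by omega : 0 < c)
    constructor
    · intro hh
      refine hw.getVert_injOn' ?_ ?_ hh
      · simp only [Set.mem_setOf_eq]; omega
      · simp only [Set.mem_setOf_eq]; omega
    · intro hh
      show w.getVert (i % c) = w.getVert (j % c)
      rw [hh]
  · intro W a b n hp hab hn
    rw [hc]
    exact hp.to_cycle hab hn

theorem exists_lcyc [DecidableEq V] [DecidableRel G.Adj] (h3 : Cut3 G) (hn : 3 ≤ Fintype.card V)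
    (hδ : ∀ x, 2 ≤ (Finset.univ.filter (fun y => G.Adj x y)).card) :
    ∃ f, LCyc G f (circumference G) := by
  obtain ⟨w⟩ : Nonempty V := Fintype.card_pos_iff.1 (by omega)
  have hwa : ∃ a, G.Adj w a := by
    obtain ⟨a, ha⟩ := Finset.card_pos.1 (lt_of_lt_of_le (by norm_num) (hδ w))
    exact ⟨a, (Finset.mem_filter.1 ha).2⟩
  obtain ⟨a, ha⟩ := hwa
  have hL : Leaf G (Finset.univ.erase w) w := by
    refine ⟨by simp, ⟨a, by simpa using ha.ne', ha.symm⟩, ?_⟩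
    intro D' hD' hne hnon z hz
    have hwD : w ∉ D' := fun hh => by simpa using hD' hh
    have hout : ∃ v, v ∉ D' ∧ v ∉ ({z} : Finset V) := by
      by_contra hcon
      push Not at hcon
      have hwz : w = z := by simpa using hcon w hwD
      apply hne
      apply Finset.Subset.antisymm hD'
      intro x hx
      by_contra hxD
      have hxz : x = z := by simpa using hcon x hxD
      rw [hxz, ← hwz] at hx
      simp at hx
    obtain ⟨x, hx, u, hu, hu', hxu⟩ := h3 D' {z} hnon (by simp) hout
    refine ⟨x, hx, u, ?_, hu, by simpa using hu', hxu⟩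
    rw [Finset.insert_erase (Finset.mem_univ _)]
    exact Finset.mem_univ _
  obtain ⟨n, hn2, p⟩ := leaf_path G _ (Finset.univ.erase w) w a 2 rfl hL (by simpa using ha.ne')
    (by
      intro v _
      rw [Finset.insert_erase (Finset.mem_univ _)]
      exact hδ v)
  have hc := p.to_cycle ha hn2
  have hne : {n | ∃ (v : V) (w : G.Walk v v), w.IsCycle ∧ w.length = n}.Nonempty := by
    by_contra hcon
    rw [Set.not_nonempty_iff_eq_empty] at hcon
    unfold circumference at hc
    rw [hcon] at hc
    simp at hc
  have hbdd : BddAbove {n | ∃ (v : V) (w : G.Walk v v), w.IsCycle ∧ w.length = n} := by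
    refine ⟨Fintype.card V, ?_⟩
    rintro m ⟨v, w, hw, rfl⟩
    have h5 := List.Nodup.length_le_card hw.support_nodup
    rw [List.length_tail, Walk.length_support] at h5
    exact h5
  obtain ⟨v, w', hw', hl⟩ := Nat.sSup_mem hne hbdd
  exact exists_lcyc_of_walk w' hw' hl

theorem connectivity_spec (hk : KConnected G 3) :
    3 ≤ connectivity G ∧ ¬ KConnected G (connectivity G + 1) ∧
      connectivity G < Fintype.card V := by
  have hbdd : BddAbove {k | KConnected G k} := ⟨Fintype.card V, fun k h => h.1.le⟩
  have hmem : KConnected G (connectivity G) := Nat.sSup_mem ⟨3, hk⟩ hbdd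
  refine ⟨le_csSup hbdd hk, fun h => ?_, hmem.1⟩
  have : connectivity G + 1 ≤ connectivity G := le_csSup hbdd h
  omega

theorem exists_separation (hk : KConnected G 3) : Fintype.card V ≤ connectivity G + 1 ∨
    ∃ S A B : Finset V, S.card ≤ connectivity G ∧ (∀ v, v ∈ S ∨ v ∈ A ∨ v ∈ B) ∧
      (∀ a ∈ A, ∀ b ∈ B, a ≠ b ∧ ¬ G.Adj a b) ∧ A.Nonempty ∧ B.Nonempty := by
  classical
  obtain ⟨h1, h2, h4⟩ := connectivity_spec hk
  by_cases hn : Fintype.card V ≤ connectivity G + 1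
  · exact Or.inl hn
  right
  unfold KConnected at h2
  have h2' : ∃ S : Finset V, S.card < connectivity G + 1 ∧
      ¬ (G.induce ((↑S : Set V)ᶜ)).Connected := by
    by_contra hcon
    push Not at hcon
    exact h2 ⟨by omega, hcon⟩
  obtain ⟨S, hS, hnc⟩ := h2'
  have hex : ∃ v, v ∉ S := by
    by_contra hcon
    push Not at hcon
    have := Finset.card_le_card (show (Finset.univ : Finset V) ⊆ S from fun x _ => hcon x)
    rw [Finset.card_univ] at this
    omega
  obtain ⟨v, hv⟩ := hex
  have hnp : ¬ (G.induce ((↑S : Set V)ᶜ)).Preconnected := by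
    intro hh
    haveI : Nonempty ((↑S : Set V)ᶜ : Set V) := ⟨⟨v, by simpa using hv⟩⟩
    exact hnc ⟨hh⟩
  unfold Preconnected at hnp
  push Not at hnp
  obtain ⟨p, q, hpq⟩ := hnp
  have hmem : ∀ {x : V}, x ∉ S → x ∈ ((↑S : Set V)ᶜ) := by intro x hx; simpa using hx
  let R : V → Prop := fun x => ∃ hx : x ∈ ((↑S : Set V)ᶜ),
    (G.induce ((↑S : Set V)ᶜ)).Reachable p ⟨x, hx⟩
  refine ⟨S, Finset.univ.filter (fun x => x ∉ S ∧ R x),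
    Finset.univ.filter (fun x => x ∉ S ∧ ¬ R x), by omega, ?_, ?_, ?_, ?_⟩
  · intro x
    simp only [Finset.mem_filter, Finset.mem_univ, true_and]
    tauto
  · intro a ha b hb
    simp only [Finset.mem_filter, Finset.mem_univ, true_and] at ha hb
    refine ⟨fun hab => hb.2 (hab ▸ ha.2), fun hab => hb.2 ?_⟩
    obtain ⟨ha', hr⟩ := ha.2
    refine ⟨hmem hb.1, hr.trans (Adj.reachable ?_)⟩
    exact hab
  · exact ⟨p.1, by
      simp only [Finset.mem_filter, Finset.mem_univ, true_and]
      exact ⟨fun hh => p.2 hh, p.2, Reachable.refl _⟩⟩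
  · exact ⟨q.1, by
      simp only [Finset.mem_filter, Finset.mem_univ, true_and]
      exact ⟨fun hh => q.2 hh, fun ⟨_, hr⟩ => hpq hr⟩⟩

end assembly

theorem nikoghosyan_1981_circumference (G : SimpleGraph V) [Fintype V] [DecidableRel G.Adj]
    (h3 : KConnected G 3) :
    (circumference G : ℤ) ≥
      min (Fintype.card V : ℤ) (3 * G.minDegree - connectivity G) := by
  classical
  have hcut : Cut3 G := fun D S hD hS hout => h3.cut 3 D S hD (by omega) hout
  have hδ : ∀ x, G.minDegree ≤ (Finset.univ.filter (fun y => G.Adj x y)).card := by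
    intro x
    have := G.minDegree_le_degree x
    rwa [← card_neighborFinset_eq_degree, neighborFinset_eq_filter] at this
  have hn := h3.1
  haveI : Nonempty V := Fintype.card_pos_iff.1 (by omega)
  have hδ3 : 3 ≤ G.minDegree := by
    obtain ⟨v, hv⟩ := G.exists_minimal_degree_vertex
    rw [hv, ← card_neighborFinset_eq_degree, neighborFinset_eq_filter]
    exact h3.degree 3 v
  obtain ⟨hκ3, -, -⟩ := connectivity_spec h3
  obtain ⟨f, hf⟩ := exists_lcyc hcut (by omega) (fun x => le_trans (by omega) (hδ x))
  have hcard := hf.card_cyc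
  by_cases hham : ∀ x, x ∈ cyc f (circumference G)
  · have h1 := Finset.card_le_card
      (show (Finset.univ : Finset V) ⊆ cyc f (circumference G) from fun x _ => hham x)
    rw [Finset.card_univ, hcard] at h1
    have h2 : (Fintype.card V : ℤ) ≤ circumference G := by exact_mod_cast h1
    exact le_trans (min_le_left _ _) h2
  · push Not at hham
    obtain ⟨x, hx⟩ := hham
    have hmain : 3 * G.minDegree ≤ circumference G + connectivity G := by
      by_cases hdom : ∀ u v, u ∉ cyc f (circumference G) → v ∉ cyc f (circumference G) →
          ¬ G.Adj u v
      · refine hf.dominating hx (by omega) hδ hdom ?_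
        rcases exists_separation h3 with h | h
        · left
          have h1 := G.minDegree_lt_card
          omega
        · exact Or.inr h
      · push Not at hdom
        obtain ⟨u, v, hu, hv, huv⟩ := hdom
        have := hf.nondom hcut (by omega) hδ hu hv huv
        omega
    have h2 : (3 * G.minDegree : ℤ) ≤ circumference G + connectivity G := by exact_mod_cast hmain
    exact le_trans (min_le_right _ _) (by linarith)
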